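/- arXiv:2007.00132 — 5 statements merged into one kernel-verified Lean document; each statement's English description precedes it below -/
import Mathlib

section
/- Let K ≥ 1 be an integer, P a real n×n̄ matrix, S_1,…,S_K symmetric positive semidefinite n̄×n̄ matrices with S_1+⋯+S_K positive definite, 𝒯 ⊆ ℝ_{≥0}^K a nonempty convex compact monotone set containing a point with all coordinates positive, and ρ > 0. Let X be a symmetric n×n matrix, x ∈ ℝ^n, ξ ∈ ℝ, and set κ = 3·ln(6K). If ζᵀXζ + 2xᵀζ ≤ ξ holds for every ζ ∈ 𝒳[κ·ρ], then there exist λ ∈ ℝ^K with λ ≥ 0 and τ ∈ ℝ such that [[∑_k λ_k S_k − PᵀXP, −Pᵀx],[−xᵀP, τ]] is positive semidefinite and ρ·φ_𝒯(λ) + τ ≤ ξ. -/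
open Matrix BigOperators

noncomputable section

/-- The ellitope `𝒳[s]`: image under `z ↦ P z` of the set of `z` with
`zᵀ S_k z ≤ s t_k` for some `t ∈ 𝒯`. -/
def ellitope {n nb K : ℕ} (P : Matrix (Fin n) (Fin nb) ℝ)
    (S : Fin K → Matrix (Fin nb) (Fin nb) ℝ) (T : Set (Fin K → ℝ)) (s : ℝ) :
    Set (Fin n → ℝ) :=
  {x | ∃ z : Fin nb → ℝ, ∃ t ∈ T, x = P *ᵥ z ∧ ∀ k, z ⬝ᵥ (S k) *ᵥ z ≤ s * t k}

/-- Support function `φ_𝒯(λ) = max_{t ∈ 𝒯} λᵀ t`. -/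
def suppFn {K : ℕ} (T : Set (Fin K → ℝ)) (lam : Fin K → ℝ) : ℝ :=
  sSup ((fun t => ∑ k, lam k * t k) '' T)

/-- `Q_+ = [[Q, q],[qᵀ, 0]]`. -/
def qPlus {m : ℕ} (Q : Matrix (Fin m) (Fin m) ℝ) (q : Fin m → ℝ) :
    Matrix (Fin m ⊕ Unit) (Fin m ⊕ Unit) ℝ :=
  Matrix.fromBlocks Q (Matrix.of fun i _ => q i) (Matrix.of fun _ j => q j) 0

/-- `BlockDiag(M, μ)`. -/
def blockDiagOne {m : ℕ} (M : Matrix (Fin m) (Fin m) ℝ) (μ : ℝ) :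
    Matrix (Fin m ⊕ Unit) (Fin m ⊕ Unit) ℝ :=
  Matrix.fromBlocks M 0 0 (Matrix.of fun _ _ => μ)

/-- The finite set of all sign vectors `η ∈ {1, -1}^ι`. -/
def signVectors (ι : Type*) [Fintype ι] [DecidableEq ι] : Finset (ι → ℝ) :=
  Fintype.piFinset fun _ => {1, -1}

lemma card_signVectors (ι : Type*) [Fintype ι] [DecidableEq ι] :
    (signVectors ι).card = 2 ^ Fintype.card ι := by
  have h : ({1, -1} : Finset ℝ).card = 2 := Finset.card_pair (by norm_num)
  simp [signVectors, Fintype.card_piFinset, h]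

lemma neg_mem_signVectors {ι : Type*} [Fintype ι] [DecidableEq ι] {η : ι → ℝ}
    (hη : η ∈ signVectors ι) : -η ∈ signVectors ι := by
  simp only [signVectors, Fintype.mem_piFinset, Finset.mem_insert, Finset.mem_singleton] at hη ⊢
  intro i
  rcases hη i with h | h <;> simp [h]

lemma sq_eq_one_of_mem_signVectors {ι : Type*} [Fintype ι] [DecidableEq ι] {η : ι → ℝ}
    (hη : η ∈ signVectors ι) (i : ι) : η i * η i = 1 := by
  simp only [signVectors, Fintype.mem_piFinset, Finset.mem_insert, Finset.mem_singleton] at hη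
  rcases hη i with h | h <;> simp [h]

lemma sum_signVectors_exp {ι : Type*} [Fintype ι] [DecidableEq ι] (b : ι → ℝ) :
    ∑ η ∈ signVectors ι, Real.exp (∑ i, b i * η i) =
      2 ^ Fintype.card ι * ∏ i, Real.cosh (b i) := by
  have h := Finset.prod_univ_sum (fun _ : ι => ({1, -1} : Finset ℝ))
    (fun i s => Real.exp (b i * s))
  simp only [Real.exp_sum, signVectors]
  rw [← h, ← Finset.card_univ, ← Finset.prod_const, ← Finset.prod_mul_distrib]
  refine Finset.prod_congr rfl fun i _ => ?_
  rw [Finset.sum_pair (by norm_num), Real.cosh_eq]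
  ring_nf

lemma gaussian_completed_square (a x : ℝ) :
    Real.exp (-(1 / 2) * x ^ 2 + a * x) =
      Real.exp (a ^ 2 / 2) * Real.exp (-(1 / 2) * (x - a) ^ 2) := by
  rw [← Real.exp_add]
  ring_nf

lemma integrable_gaussian_exp_linear (a : ℝ) :
    MeasureTheory.Integrable fun x : ℝ => Real.exp (-(1 / 2) * x ^ 2 + a * x) := by
  simp_rw [gaussian_completed_square a]
  exact ((integrable_exp_neg_mul_sq (b := 1 / 2) (by norm_num)).comp_sub_right a).const_mul _

lemma integral_gaussian_exp_linear (a : ℝ) :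
    ∫ x : ℝ, Real.exp (-(1 / 2) * x ^ 2 + a * x) =
      √(Real.pi / (1 / 2)) * Real.exp (a ^ 2 / 2) := by
  simp_rw [gaussian_completed_square a]
  rw [MeasureTheory.integral_const_mul,
    MeasureTheory.integral_sub_right_eq_self (fun x : ℝ => Real.exp (-(1 / 2) * x ^ 2)) a,
    integral_gaussian, mul_comm]

/-- Sub-Gaussian bound for the square of a shifted Rademacher sum. -/
lemma sum_signVectors_exp_sq_le {ι : Type*} [Fintype ι] [DecidableEq ι] (b₀ : ℝ) (b : ι → ℝ)
    {β : ℝ} (hβ : 0 < β) (hb : b₀ ^ 2 + ∑ i, b i ^ 2 = β) :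
    ∑ η ∈ signVectors ι, Real.exp ((b₀ + ∑ i, b i * η i) ^ 2 / (3 * β)) ≤
      √3 * 2 ^ Fintype.card ι := by
  set c : ℝ := √(2 / (3 * β))
  have hc2 : c ^ 2 = 2 / (3 * β) := Real.sq_sqrt (by positivity)
  have hsplit : ∀ (ε : ℝ), ε = 1 ∨ ε = -1 → ∀ x : ℝ,
      ∑ η ∈ signVectors ι, Real.exp (-(1 / 2) * x ^ 2 + ε * (c * (b₀ + ∑ i, b i * η i)) * x) =
        Real.exp (-(1 / 2) * x ^ 2) * Real.exp (ε * (c * b₀ * x)) *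
          (2 ^ Fintype.card ι * ∏ i, Real.cosh (c * b i * x)) := by
    intro ε hε x
    have h := sum_signVectors_exp fun i => ε * (c * b i * x)
    have hcosh : ∀ i, Real.cosh (ε * (c * b i * x)) = Real.cosh (c * b i * x) := by
      intro i
      rcases hε with rfl | rfl
      · rw [one_mul]
      · rw [neg_one_mul, Real.cosh_neg]
    simp_rw [hcosh] at h
    rw [← h, Finset.mul_sum]
    refine Finset.sum_congr rfl fun η _ => ?_
    rw [← Real.exp_add, ← Real.exp_add]
    congr 1
    have : ∑ i, ε * (c * b i * x) * η i = ε * c * x * ∑ i, b i * η i := by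
      rw [Finset.mul_sum]
      exact Finset.sum_congr rfl fun i _ => by ring
    rw [this]
    ring
  have hpoint : ∀ x : ℝ,
      ∑ η ∈ signVectors ι,
        (Real.exp (-(1 / 2) * x ^ 2 + 1 * (c * (b₀ + ∑ i, b i * η i)) * x) +
          Real.exp (-(1 / 2) * x ^ 2 + -1 * (c * (b₀ + ∑ i, b i * η i)) * x)) ≤
        2 * 2 ^ Fintype.card ι * Real.exp (-(1 / 6) * x ^ 2) := by
    intro x
    rw [Finset.sum_add_distrib, hsplit 1 (Or.inl rfl), hsplit (-1) (Or.inr rfl)]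
    have hprod : Real.cosh (c * b₀ * x) * ∏ i, Real.cosh (c * b i * x) ≤
        Real.exp (x ^ 2 / 3) := by
      calc Real.cosh (c * b₀ * x) * ∏ i, Real.cosh (c * b i * x)
          ≤ Real.exp ((c * b₀ * x) ^ 2 / 2) * ∏ i, Real.exp ((c * b i * x) ^ 2 / 2) := by
            gcongr with i
            · exact Real.cosh_le_exp_half_sq _
            · exact Real.cosh_le_exp_half_sq _
        _ = Real.exp (x ^ 2 / 3) := by
            rw [← Real.exp_sum, ← Real.exp_add]
            congr 1
            have : ∑ i, (c * b i * x) ^ 2 / 2 = c ^ 2 * x ^ 2 / 2 * ∑ i, b i ^ 2 := by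
              rw [Finset.mul_sum]
              exact Finset.sum_congr rfl fun i _ => by ring
            rw [this]
            calc _ = c ^ 2 * x ^ 2 / 2 * (b₀ ^ 2 + ∑ i, b i ^ 2) := by ring
              _ = _ := by rw [hb, hc2]; field_simp
    calc _ = 2 * 2 ^ Fintype.card ι * (Real.exp (-(1 / 2) * x ^ 2) *
          (Real.cosh (c * b₀ * x) * ∏ i, Real.cosh (c * b i * x))) := by
            rw [Real.cosh_eq (c * b₀ * x), one_mul, neg_one_mul]; ring
      _ ≤ 2 * 2 ^ Fintype.card ι * (Real.exp (-(1 / 2) * x ^ 2) * Real.exp (x ^ 2 / 3)) := by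
            gcongr
      _ = _ := by rw [← Real.exp_add]; ring_nf
  have hint : ∀ η ∈ signVectors ι, MeasureTheory.Integrable fun x : ℝ =>
      (Real.exp (-(1 / 2) * x ^ 2 + 1 * (c * (b₀ + ∑ i, b i * η i)) * x) +
          Real.exp (-(1 / 2) * x ^ 2 + -1 * (c * (b₀ + ∑ i, b i * η i)) * x)) :=
    fun η _ => (integrable_gaussian_exp_linear _).add (integrable_gaussian_exp_linear _)
  have hmono := MeasureTheory.integral_mono (MeasureTheory.integrable_finsetSum _ hint)
    ((integrable_exp_neg_mul_sq (b := 1 / 6) (by norm_num)).const_mul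
      (2 * 2 ^ Fintype.card ι)) hpoint
  rw [MeasureTheory.integral_finsetSum _ hint, MeasureTheory.integral_const_mul,
    integral_gaussian] at hmono
  have hval : ∀ η ∈ signVectors ι,
      ∫ x : ℝ, (Real.exp (-(1 / 2) * x ^ 2 + 1 * (c * (b₀ + ∑ i, b i * η i)) * x) +
          Real.exp (-(1 / 2) * x ^ 2 + -1 * (c * (b₀ + ∑ i, b i * η i)) * x)) =
        2 * √(Real.pi / (1 / 2)) * Real.exp ((b₀ + ∑ i, b i * η i) ^ 2 / (3 * β)) := by
    intro η _
    rw [MeasureTheory.integral_add (integrable_gaussian_exp_linear _)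
      (integrable_gaussian_exp_linear _), integral_gaussian_exp_linear,
      integral_gaussian_exp_linear]
    have h1 : (1 * (c * (b₀ + ∑ i, b i * η i))) ^ 2 / 2 =
        (b₀ + ∑ i, b i * η i) ^ 2 / (3 * β) := by
      rw [one_mul, mul_pow, hc2]; field_simp
    have h2 : (-1 * (c * (b₀ + ∑ i, b i * η i))) ^ 2 / 2 =
        (b₀ + ∑ i, b i * η i) ^ 2 / (3 * β) := by
      rw [← h1]; ring
    rw [h1, h2]
    ring
  rw [Finset.sum_congr rfl hval, ← Finset.mul_sum] at hmono
  have hpi : √(Real.pi / (1 / 6)) = √(Real.pi / (1 / 2)) * √3 := by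
    rw [← Real.sqrt_mul (by positivity)]
    congr 1
    ring
  rw [hpi] at hmono
  have hpos : 0 < 2 * √(Real.pi / (1 / 2)) := by positivity
  refine le_of_mul_le_mul_left (hmono.trans_eq ?_) hpos
  ring

lemma exists_eq_transpose_mul_self {m : Type*} [Fintype m] [DecidableEq m]
    {S : Matrix m m ℝ} (hS : S.PosSemidef) :
    ∃ L : Matrix m m ℝ, S = Lᵀ * L := by
  open scoped MatrixOrder in
  obtain ⟨L, hL⟩ := CStarAlgebra.nonneg_iff_eq_star_mul_self.mp hS.nonneg
  exact ⟨L, by simpa [Matrix.star_eq_conjTranspose] using hL⟩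

lemma dotProduct_transpose_mul_self_mulVec {m l : Type*} [Fintype m] [Fintype l]
    (L : Matrix l m ℝ) (z : m → ℝ) :
    z ⬝ᵥ (Lᵀ * L) *ᵥ z = ∑ j, (L *ᵥ z) j ^ 2 := by
  rw [← Matrix.mulVec_mulVec, Matrix.dotProduct_mulVec, Matrix.vecMul_transpose]
  simp [dotProduct, sq]

lemma trace_transpose_mul_self_conj {m l ι : Type*} [Fintype m] [Fintype l] [Fintype ι]
    (L : Matrix l m ℝ) (A : Matrix m ι ℝ) :
    (Aᵀ * (Lᵀ * L) * A).trace = ∑ j, ∑ i, (L * A) j i ^ 2 := by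
  have : Aᵀ * (Lᵀ * L) * A = (L * A)ᵀ * (L * A) := by
    simp only [Matrix.transpose_mul, Matrix.mul_assoc]
  rw [this, Finset.sum_comm]
  generalize L * A = C
  simp [Matrix.trace, Matrix.mul_apply, sq]

lemma sum_signVectors_exp_quadratic_le {m ι : Type*} [Fintype m] [DecidableEq m] [Fintype ι]
    [DecidableEq ι] {S : Matrix m m ℝ} (hS : S.PosSemidef) (v : m → ℝ) (A : Matrix m ι ℝ)
    (hβ : 0 < v ⬝ᵥ S *ᵥ v + (Aᵀ * S * A).trace) :
    ∑ η ∈ signVectors ι, Real.exp ((v + A *ᵥ η) ⬝ᵥ S *ᵥ (v + A *ᵥ η) /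
        (3 * (v ⬝ᵥ S *ᵥ v + (Aᵀ * S * A).trace))) ≤
      √3 * 2 ^ Fintype.card ι := by
  obtain ⟨L, rfl⟩ := exists_eq_transpose_mul_self hS
  rw [dotProduct_transpose_mul_self_mulVec, trace_transpose_mul_self_conj,
    ← Finset.sum_add_distrib] at hβ ⊢
  set β : m → ℝ := fun j => (L *ᵥ v) j ^ 2 + ∑ i, (L * A) j i ^ 2 with hβdef
  change 0 < ∑ j, β j at hβ
  change ∑ η ∈ signVectors ι, Real.exp (_ / (3 * ∑ j, β j)) ≤ _
  have hβ0 : ∀ j, 0 ≤ β j := fun j => by positivity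
  set r : (ι → ℝ) → m → ℝ := fun η j => (L *ᵥ v) j + ∑ i, (L * A) j i * η i with hr
  have hu : ∀ η j, (L *ᵥ (v + A *ᵥ η)) j = r η j := by
    intro η j
    rw [Matrix.mulVec_add, Matrix.mulVec_mulVec]
    rfl
  have hr0 : ∀ η j, β j = 0 → r η j = 0 := by
    intro η j hj
    have hs : 0 ≤ ∑ i, (L * A) j i ^ 2 := Finset.sum_nonneg fun i _ => sq_nonneg _
    have h1 : (L *ᵥ v) j = 0 := by
      have := sq_nonneg ((L *ᵥ v) j)
      exact pow_eq_zero_iff (two_ne_zero) |>.mp (by simp only [hβdef] at hj; linarith)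
    have h2 : ∑ i, (L * A) j i ^ 2 = 0 := by
      simp only [hβdef, h1] at hj
      linarith
    rw [Finset.sum_eq_zero_iff_of_nonneg fun i _ => sq_nonneg _] at h2
    have h3 : ∀ i, (L * A) j i = 0 := fun i => by simpa using h2 i (Finset.mem_univ i)
    simp [hr, h1, h3]
  have hjensen : ∀ η, Real.exp ((v + A *ᵥ η) ⬝ᵥ (Lᵀ * L) *ᵥ (v + A *ᵥ η) / (3 * ∑ j, β j)) ≤
      ∑ j, β j / (∑ j, β j) * Real.exp (r η j ^ 2 / (3 * β j)) := by
    intro η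
    have h := convexOn_exp.map_sum_le (t := Finset.univ) (w := fun j => β j / ∑ j, β j)
      (p := fun j => r η j ^ 2 / (3 * β j)) (fun j _ => div_nonneg (hβ0 j) hβ.le)
      (by rw [← Finset.sum_div, div_self hβ.ne']) (fun _ _ => Set.mem_univ _)
    simp only [smul_eq_mul] at h
    refine le_trans (le_of_eq ?_) h
    congr 1
    rw [dotProduct_transpose_mul_self_mulVec, Finset.sum_div]
    refine Finset.sum_congr rfl fun j _ => ?_
    rw [hu]
    rcases (hβ0 j).eq_or_lt with hj | hj
    · simp [hr0 η j hj.symm]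
    · field_simp
  calc _ ≤ ∑ η ∈ signVectors ι, ∑ j, β j / (∑ j, β j) * Real.exp (r η j ^ 2 / (3 * β j)) :=
        Finset.sum_le_sum fun η _ => hjensen η
    _ = ∑ j, β j / (∑ j, β j) * ∑ η ∈ signVectors ι, Real.exp (r η j ^ 2 / (3 * β j)) := by
        rw [Finset.sum_comm]
        simp_rw [Finset.mul_sum]
    _ ≤ ∑ j, β j / (∑ j, β j) * (√3 * 2 ^ Fintype.card ι) := by
        refine Finset.sum_le_sum fun j _ => ?_
        rcases (hβ0 j).eq_or_lt with hj | hj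
        · simp [← hj]
        · exact mul_le_mul_of_nonneg_left (sum_signVectors_exp_sq_le _ _ hj rfl)
            (div_nonneg hj.le hβ.le)
    _ = √3 * 2 ^ Fintype.card ι := by
        rw [← Finset.sum_mul, ← Finset.sum_div, div_self hβ.ne', one_mul]

/-- Large deviations of a positive semidefinite quadratic form of a Rademacher vector. -/
lemma card_signVectors_quadratic_gt_le {m ι : Type*} [Fintype m] [DecidableEq m] [Fintype ι]
    [DecidableEq ι] {S : Matrix m m ℝ} (hS : S.PosSemidef) (v : m → ℝ) (A : Matrix m ι ℝ)
    {M : ℝ} (hM : 1 ≤ M) :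
    M * ((signVectors ι).filter fun η =>
        3 * Real.log M * (v ⬝ᵥ S *ᵥ v + (Aᵀ * S * A).trace) <
          (v + A *ᵥ η) ⬝ᵥ S *ᵥ (v + A *ᵥ η)).card ≤
      √3 * 2 ^ Fintype.card ι := by
  have hM0 : 0 < M := by linarith
  have hβ0 : 0 ≤ v ⬝ᵥ S *ᵥ v + (Aᵀ * S * A).trace := by
    refine add_nonneg (by simpa using hS.dotProduct_mulVec_nonneg v) ?_
    simpa using (hS.conjTranspose_mul_mul_same A).trace_nonneg
  rcases hβ0.eq_or_lt with hβ | hβ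
  · have hzero : ∀ η, (v + A *ᵥ η) ⬝ᵥ S *ᵥ (v + A *ᵥ η) = 0 := by
      obtain ⟨L, rfl⟩ := exists_eq_transpose_mul_self hS
      rw [dotProduct_transpose_mul_self_mulVec, trace_transpose_mul_self_conj] at hβ
      have h1 : 0 ≤ ∑ j, (L *ᵥ v) j ^ 2 := by positivity
      have h2 : 0 ≤ ∑ j, ∑ i, (L * A) j i ^ 2 := by positivity
      have h3 : ∑ j, (L *ᵥ v) j ^ 2 = 0 := by linarith
      have h4 : ∑ j, ∑ i, (L * A) j i ^ 2 = 0 := by linarith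
      rw [Finset.sum_eq_zero_iff_of_nonneg fun j _ => by positivity] at h3 h4
      have h5 : L *ᵥ v = 0 := by
        ext j
        simpa using h3 j (Finset.mem_univ j)
      have h6 : L * A = 0 := by
        ext j i
        have := h4 j (Finset.mem_univ j)
        rw [Finset.sum_eq_zero_iff_of_nonneg fun j _ => by positivity] at this
        simpa using this i (Finset.mem_univ i)
      intro η
      rw [dotProduct_transpose_mul_self_mulVec, Matrix.mulVec_add, Matrix.mulVec_mulVec, h5, h6]
      simp
    simp only [hzero, ← hβ, mul_zero, lt_irrefl, Finset.filter_false, Finset.card_empty,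
      Nat.cast_zero]
    positivity
  · refine le_trans ?_ (sum_signVectors_exp_quadratic_le hS v A hβ)
    rw [mul_comm, ← nsmul_eq_mul]
    refine (Finset.card_nsmul_le_sum _ _ M fun η hη => ?_).trans
      (Finset.sum_le_sum_of_subset_of_nonneg (Finset.filter_subset _ _)
        fun η _ _ => (Real.exp_pos _).le)
    rw [← Real.log_le_iff_le_exp hM0, le_div_iff₀ (by positivity)]
    have := (Finset.mem_filter.mp hη).2
    linarith

/-- Orthogonal diagonalization of a real symmetric matrix. -/
lemma exists_orthogonal_diagonalizing {ι : Type*} [Fintype ι] [DecidableEq ι]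
    {N : Matrix ι ι ℝ} (hN : N.IsSymm) :
    ∃ (U : Matrix ι ι ℝ) (d : ι → ℝ), U * Uᵀ = 1 ∧ Uᵀ * N * U = Matrix.diagonal d := by
  have hH : N.IsHermitian := by
    rw [Matrix.IsHermitian, Matrix.conjTranspose_eq_transpose_of_trivial]
    exact hN
  refine ⟨hH.eigenvectorUnitary, hH.eigenvalues, ?_, ?_⟩
  · simpa [Matrix.star_eq_conjTranspose] using Unitary.coe_mul_star_self hH.eigenvectorUnitary
  · have := hH.conjStarAlgAut_star_eigenvectorUnitary
    simpa [Unitary.conjStarAlgAut_apply, Matrix.star_eq_conjTranspose] using this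

lemma exists_signVector_forall_quadratic_le {m ι : Type*} [Fintype m] [DecidableEq m]
    [Fintype ι] [DecidableEq ι] {K : ℕ} (hK : 1 ≤ K) {S : Fin K → Matrix m m ℝ}
    (hS : ∀ k, (S k).PosSemidef) (v : m → ℝ) (A : Matrix m ι ℝ) :
    ∃ η ∈ signVectors ι, ∀ k,
      (v + A *ᵥ η) ⬝ᵥ S k *ᵥ (v + A *ᵥ η) ≤
          3 * Real.log (6 * K) * (v ⬝ᵥ S k *ᵥ v + (Aᵀ * S k * A).trace) ∧
        (v + A *ᵥ (-η)) ⬝ᵥ S k *ᵥ (v + A *ᵥ (-η)) ≤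
          3 * Real.log (6 * K) * (v ⬝ᵥ S k *ᵥ v + (Aᵀ * S k * A).trace) := by
  have hK1 : (1 : ℝ) ≤ K := by exact_mod_cast hK
  set bad : Fin K → Finset (ι → ℝ) := fun k => (signVectors ι).filter fun η =>
    3 * Real.log (6 * K) * (v ⬝ᵥ S k *ᵥ v + (Aᵀ * S k * A).trace) <
      (v + A *ᵥ η) ⬝ᵥ S k *ᵥ (v + A *ᵥ η)
  set B := Finset.univ.biUnion bad
  have hcard : (B.card : ℝ) ≤ √3 / 6 * 2 ^ Fintype.card ι := by
    calc (B.card : ℝ) ≤ ∑ k, ((bad k).card : ℝ) := by exact_mod_cast Finset.card_biUnion_le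
      _ ≤ ∑ _k : Fin K, √3 * 2 ^ Fintype.card ι / (6 * K) := by
          refine Finset.sum_le_sum fun k _ => ?_
          rw [le_div_iff₀ (by positivity), mul_comm]
          exact card_signVectors_quadratic_gt_le (hS k) v A (by linarith)
      _ = √3 / 6 * 2 ^ Fintype.card ι := by
          rw [Finset.sum_const, Finset.card_univ, Fintype.card_fin, nsmul_eq_mul]
          field_simp
  have hlt : (B ∪ B.image Neg.neg).card < (signVectors ι).card := by
    have h1 : ((B ∪ B.image Neg.neg).card : ℝ) ≤ B.card + B.card := by
      exact_mod_cast (Finset.card_union_le _ _).trans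
        (Nat.add_le_add_left Finset.card_image_le _)
    have h2 : √3 < 3 := by
      rw [Real.sqrt_lt' (by norm_num)]
      norm_num
    have h3 : (0 : ℝ) < 2 ^ Fintype.card ι := by positivity
    have h4 : ((B ∪ B.image Neg.neg).card : ℝ) < 2 ^ Fintype.card ι := by nlinarith
    rw [card_signVectors]
    exact_mod_cast h4
  obtain ⟨η, hη, hηB⟩ := Finset.exists_mem_notMem_of_card_lt_card hlt
  rw [Finset.mem_union, not_or] at hηB
  refine ⟨η, hη, fun k => ⟨?_, ?_⟩⟩
  · by_contra! h
    exact hηB.1 (Finset.mem_biUnion.mpr ⟨k, Finset.mem_univ k, Finset.mem_filter.mpr ⟨hη, h⟩⟩)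
  · by_contra! h
    refine hηB.2 (Finset.mem_image.mpr ⟨-η, ?_, neg_neg η⟩)
    exact Finset.mem_biUnion.mpr
      ⟨k, Finset.mem_univ k, Finset.mem_filter.mpr ⟨neg_mem_signVectors hη, h⟩⟩

lemma quadratic_add_add_quadratic_sub {m : Type*} [Fintype m] (Q : Matrix m m ℝ)
    (v w : m → ℝ) :
    (v + w) ⬝ᵥ Q *ᵥ (v + w) + (v - w) ⬝ᵥ Q *ᵥ (v - w) =
      2 * (v ⬝ᵥ Q *ᵥ v) + 2 * (w ⬝ᵥ Q *ᵥ w) := by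
  simp only [Matrix.mulVec_add, Matrix.mulVec_sub, dotProduct_add, dotProduct_sub,
    add_dotProduct, sub_dotProduct]
  ring

/-- The second moment of a finite distribution splits into the squared mean and the covariance. -/
lemma sum_weighted_quadratic {m ι : Type*} [Fintype m] [Fintype ι] (Q : Matrix m m ℝ)
    {p : ι → ℝ} (hp : ∀ i, 0 ≤ p i) (hp1 : ∑ i, p i = 1) (u : ι → m → ℝ) :
    ∑ i, p i * (u i ⬝ᵥ Q *ᵥ u i) =
      (∑ i, p i • u i) ⬝ᵥ Q *ᵥ (∑ i, p i • u i) +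
        ((Matrix.of fun a i => √(p i) * (u i - ∑ j, p j • u j) a)ᵀ * Q *
          Matrix.of fun a i => √(p i) * (u i - ∑ j, p j • u j) a).trace := by
  set v := ∑ i, p i • u i with hv
  have htrace : ((Matrix.of fun a i => √(p i) * (u i - v) a)ᵀ * Q *
      Matrix.of fun a i => √(p i) * (u i - v) a).trace =
        ∑ i, p i * ((u i - v) ⬝ᵥ Q *ᵥ (u i - v)) := by
    refine Finset.sum_congr rfl fun i _ => ?_
    rw [Matrix.diag_apply, Matrix.mul_apply, dotProduct_mulVec, dotProduct, Finset.mul_sum]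
    refine Finset.sum_congr rfl fun b _ => ?_
    have hentry : ((Matrix.of fun a i => √(p i) * (u i - v) a)ᵀ * Q) i b =
        √(p i) * ((u i - v) ᵥ* Q) b := by
      rw [Matrix.mul_apply, Matrix.vecMul, dotProduct, Finset.mul_sum]
      exact Finset.sum_congr rfl fun a _ => mul_assoc _ _ _
    rw [hentry, Matrix.of_apply]
    linear_combination ((u i - v) ᵥ* Q) b * (u i - v) b * Real.mul_self_sqrt (hp i)
  rw [htrace]
  have h1 : ∑ i, p i * (u i ⬝ᵥ Q *ᵥ v) = v ⬝ᵥ Q *ᵥ v := by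
    conv_rhs => rw [hv, sum_dotProduct]
    simp [hv]
  have h2 : ∑ i, p i * (v ⬝ᵥ Q *ᵥ u i) = v ⬝ᵥ Q *ᵥ v := by
    have : Q *ᵥ v = ∑ i, p i • Q *ᵥ u i := by
      rw [hv, Matrix.mulVec_sum]
      simp only [Matrix.mulVec_smul]
    rw [this, dotProduct_sum]
    simp
  simp only [Matrix.mulVec_sub, dotProduct_sub, sub_dotProduct, mul_sub,
    Finset.sum_sub_distrib, h1, h2, ← Finset.sum_mul, hp1]
  ring

/-- Randomized rounding: a quadratic inequality valid on the enlarged set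
`{z | zᵀ S_k z ≤ 3 log (6 K) s_k}` holds on average for every finite distribution whose second
moments are bounded by `s`. -/
lemma sum_weighted_le_of_forall_quadratic_le {m ι : Type*} [Fintype m] [DecidableEq m]
    [Fintype ι] {K : ℕ} (hK : 1 ≤ K) {S : Fin K → Matrix m m ℝ}
    (hS : ∀ k, (S k).PosSemidef) {Q : Matrix m m ℝ} (hQ : Q.IsSymm) (q : m → ℝ) (ξ : ℝ)
    (s : Fin K → ℝ)
    (hrob : ∀ z, (∀ k, z ⬝ᵥ S k *ᵥ z ≤ 3 * Real.log (6 * K) * s k) →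
      z ⬝ᵥ Q *ᵥ z + 2 * (q ⬝ᵥ z) ≤ ξ)
    {p : ι → ℝ} (hp : ∀ i, 0 ≤ p i) (hp1 : ∑ i, p i = 1) (u : ι → m → ℝ)
    (hu : ∀ k, ∑ i, p i * (u i ⬝ᵥ S k *ᵥ u i) ≤ s k) :
    ∑ i, p i * (u i ⬝ᵥ Q *ᵥ u i + 2 * (q ⬝ᵥ u i)) ≤ ξ := by
  classical
  have hlog : 0 ≤ Real.log (6 * K) := by
    have hK1 : (1 : ℝ) ≤ K := by exact_mod_cast hK
    exact Real.log_nonneg (by linarith)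
  simp_rw [sum_weighted_quadratic _ hp hp1] at hu
  have hlin : ∑ i, p i * (2 * (q ⬝ᵥ u i)) = 2 * (q ⬝ᵥ ∑ i, p i • u i) := by
    rw [dotProduct_sum, Finset.mul_sum]
    refine Finset.sum_congr rfl fun i _ => ?_
    rw [dotProduct_smul, smul_eq_mul]
    ring
  simp_rw [mul_add, Finset.sum_add_distrib]
  rw [sum_weighted_quadratic _ hp hp1, hlin]
  generalize ∑ i, p i • u i = v at hu ⊢
  generalize (Matrix.of fun a i => √(p i) * (u i - v) a : Matrix m ι ℝ) = A at hu ⊢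
  have hsymm : (Aᵀ * Q * A).IsSymm := by
    rw [Matrix.IsSymm, Matrix.transpose_mul, Matrix.transpose_mul, Matrix.transpose_transpose,
      hQ.eq, Matrix.mul_assoc]
  obtain ⟨U, d, hU, hd⟩ := exists_orthogonal_diagonalizing hsymm
  have htrace : ∀ R : Matrix m m ℝ, ((A * U)ᵀ * R * (A * U)).trace = (Aᵀ * R * A).trace := by
    intro R
    have : (A * U)ᵀ * R * (A * U) = Uᵀ * (Aᵀ * R * A) * U := by
      simp only [Matrix.transpose_mul, Matrix.mul_assoc]
    rw [this, Matrix.trace_mul_cycle, hU, Matrix.one_mul]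
  obtain ⟨η, hη, hgood⟩ := exists_signVector_forall_quadratic_le hK hS v (A * U)
  have hdiag : ((A * U) *ᵥ η) ⬝ᵥ Q *ᵥ ((A * U) *ᵥ η) = (Aᵀ * Q * A).trace := by
    rw [← htrace Q]
    have hd' : (A * U)ᵀ * Q * (A * U) = Matrix.diagonal d := by
      rw [← hd]
      simp only [Matrix.transpose_mul, Matrix.mul_assoc]
    calc ((A * U) *ᵥ η) ⬝ᵥ Q *ᵥ ((A * U) *ᵥ η) = η ⬝ᵥ ((A * U)ᵀ * Q * (A * U)) *ᵥ η := by
          generalize A * U = C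
          rw [Matrix.mul_assoc, ← Matrix.mulVec_mulVec, ← Matrix.mulVec_mulVec,
            Matrix.dotProduct_mulVec η, Matrix.vecMul_transpose]
      _ = _ := by
          rw [hd', Matrix.trace_diagonal]
          simp only [dotProduct, Matrix.mulVec_diagonal]
          refine Finset.sum_congr rfl fun i _ => ?_
          linear_combination d i * sq_eq_one_of_mem_signVectors hη i
  have hbound : ∀ k, 3 * Real.log (6 * K) *
      (v ⬝ᵥ S k *ᵥ v + ((A * U)ᵀ * S k * (A * U)).trace) ≤ 3 * Real.log (6 * K) * s k := by
    intro k
    rw [htrace]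
    exact mul_le_mul_of_nonneg_left (hu k) (by positivity)
  have hplus := hrob _ fun k => (hgood k).1.trans (hbound k)
  have hminus := hrob _ fun k => (hgood k).2.trans (hbound k)
  rw [Matrix.mulVec_neg, ← sub_eq_add_neg] at hminus
  have hpar := quadratic_add_add_quadratic_sub Q v ((A * U) *ᵥ η)
  rw [dotProduct_add] at hplus
  rw [dotProduct_sub] at hminus
  linarith

/-- Lagrange duality: if every convex combination of the points `(g i, f i)` with negative
constraint values has objective at most `ξ`, then under Slater's condition there are
multipliers certifying this bound. -/
lemma exists_multipliers {ι : Type*} {K : ℕ} (g : ι → Fin K → ℝ) (f : ι → ℝ) (ξ : ℝ)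
    (hfeas : ∀ y ∈ convexHull ℝ (Set.range fun i => (g i, f i)), (∀ k, y.1 k < 0) → y.2 ≤ ξ)
    (hslater : ∃ i, ∀ k, g i k < 0) :
    ∃ lam : Fin K → ℝ, (∀ k, 0 ≤ lam k) ∧ ∀ i, f i - ∑ k, lam k * g i k ≤ ξ := by
  set D : Set ((Fin K → ℝ) × ℝ) := (Set.univ.pi fun _ => Set.Iio 0) ×ˢ Set.Ioi ξ with hD
  have hDmem : ∀ y, y ∈ D ↔ (∀ k, y.1 k < 0) ∧ ξ < y.2 := by
    intro y
    simp [hD, Set.mem_prod, Set.mem_pi]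
  have hDconv : Convex ℝ D := (convex_pi fun _ _ => convex_Iio 0).prod (convex_Ioi ξ)
  have hDopen : IsOpen D :=
    (isOpen_set_pi Set.finite_univ fun _ _ => isOpen_Iio).prod isOpen_Ioi
  have hdisj : Disjoint D (convexHull ℝ (Set.range fun i => (g i, f i))) := by
    rw [Set.disjoint_left]
    intro y hyD hy
    rw [hDmem] at hyD
    exact absurd (hfeas y hy hyD.1) (not_le.mpr hyD.2)
  obtain ⟨F, c, hFD, hFC⟩ := geometric_hahn_banach_open hDconv hDopen
    (convex_convexHull ℝ _) hdisj
  set a : Fin K → ℝ := fun k => F (Pi.single k 1, 0) with ha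
  set μ : ℝ := F (0, 1) with hμ
  have hF : ∀ y : (Fin K → ℝ) × ℝ, F y = ∑ k, a k * y.1 k + μ * y.2 := by
    intro y
    have hy : y = ∑ k, y.1 k • ((Pi.single k 1, 0) : (Fin K → ℝ) × ℝ) + y.2 • (0, 1) := by
      refine Prod.ext ?_ ?_
      · ext j
        simp [Prod.fst_sum, Finset.sum_apply, Pi.single_apply]
      · simp [Prod.snd_sum]
    conv_lhs => rw [hy]
    simp only [map_add, map_sum, map_smul, smul_eq_mul, ha, hμ]
    congr 1
    · exact Finset.sum_congr rfl fun k _ => mul_comm _ _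
    · exact mul_comm _ _
  have hbound : ∀ (d : Fin K → ℝ) (r : ℝ), (∀ k, d k < 0) → ξ < r →
      ∑ k, a k * d k + μ * r < c := by
    intro d r hd hr
    simpa [hF] using hFD (d, r) ((hDmem _).mpr ⟨hd, hr⟩)
  have hclosure : ∀ (d : Fin K → ℝ) (r : ℝ), (∀ k, d k ≤ 0) → ξ ≤ r →
      ∑ k, a k * d k + μ * r ≤ c := by
    intro d r hd hr
    have hcont : Continuous fun ε : ℝ => ∑ k, a k * (d k - ε) + μ * (r + ε) := by fun_prop
    have htend := (hcont.tendsto 0).mono_left (nhdsWithin_le_nhds (s := Set.Ioi 0))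
    simp only [sub_zero, add_zero] at htend
    refine le_of_tendsto htend ?_
    filter_upwards [self_mem_nhdsWithin] with ε hε
    have hε' : 0 < ε := hε
    exact (hbound _ _ (fun k => by linarith [hd k]) (by linarith)).le
  have ha0 : ∀ k, 0 ≤ a k := by
    intro k
    by_contra! hk
    set N : ℝ := (|c - μ * ξ| + 1) / (-a k) with hN
    have hN0 : 0 ≤ N := div_nonneg (by positivity) (by linarith)
    have h := hclosure (Pi.single k (-N)) ξ (fun j => by
      rcases eq_or_ne j k with rfl | hj
      · simpa using hN0
      · simp [hj]) le_rfl
    simp only [Pi.single_apply, mul_ite, mul_zero, Finset.sum_ite_eq', Finset.mem_univ,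
      if_true] at h
    have hval : a k * -N = |c - μ * ξ| + 1 := by
      have hne := hk.ne
      rw [hN]
      field_simp
    linarith [le_abs_self (c - μ * ξ)]
  have hμ0 : μ ≤ 0 := by
    by_contra! hk
    have hN0 : 0 ≤ (|c - μ * ξ| + 1) / μ := by positivity
    have h := hclosure 0 (ξ + (|c - μ * ξ| + 1) / μ) (fun _ => le_rfl) (by linarith)
    have hval : μ * ((|c - μ * ξ| + 1) / μ) = |c - μ * ξ| + 1 := by field_simp
    simp only [Pi.zero_apply, mul_zero, Finset.sum_const_zero, mul_add, hval] at h
    linarith [le_abs_self (c - μ * ξ)]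
  have hcξ : μ * ξ ≤ c := by simpa using hclosure 0 ξ (fun _ => le_rfl) le_rfl
  have hC : ∀ i, c ≤ ∑ k, a k * g i k + μ * f i := by
    intro i
    simpa [hF] using hFC _ (subset_convexHull ℝ _ ⟨i, rfl⟩)
  have hμneg : μ < 0 := by
    refine lt_of_le_of_ne hμ0 fun hμeq => ?_
    obtain ⟨i, hi⟩ := hslater
    have h1 := hC i
    have h2 := hbound (g i) (ξ + 1) hi (by linarith)
    rw [hμeq] at h1 h2
    linarith
  refine ⟨fun k => a k / (-μ), fun k => div_nonneg (ha0 k) (by linarith), fun i => ?_⟩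
  have h := hcξ.trans (hC i)
  have hsum : ∑ k, a k / (-μ) * g i k = (∑ k, a k * g i k) / (-μ) := by
    rw [Finset.sum_div]
    exact Finset.sum_congr rfl fun k _ => by ring
  rw [hsum, sub_le_iff_le_add, ← sub_le_iff_le_add', le_div_iff₀ (by linarith)]
  linarith

/-- Nonnegativity of `u ↦ uᵀ M u - 2 bᵀ u + τ` is positive semidefiniteness of the
corresponding bordered matrix. -/
lemma posSemidef_bordered {m : Type*} [Fintype m] {M : Matrix m m ℝ} (hM : M.IsSymm)
    (b : m → ℝ) (τ : ℝ) (h : ∀ u : m → ℝ, 0 ≤ u ⬝ᵥ M *ᵥ u - 2 * (b ⬝ᵥ u) + τ) :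
    (Matrix.fromBlocks M (Matrix.of fun i (_ : Unit) => -b i)
      (Matrix.of fun (_ : Unit) j => -b j) (Matrix.of fun _ _ => τ)).PosSemidef := by
  refine Matrix.PosSemidef.of_dotProduct_mulVec_nonneg ?_ fun w => ?_
  · rw [Matrix.IsHermitian, Matrix.conjTranspose_eq_transpose_of_trivial,
      Matrix.fromBlocks_transpose, hM.eq]
    rfl
  · obtain ⟨u, y, rfl⟩ : ∃ (u : m → ℝ) (y : ℝ), w = Sum.elim u fun _ => y :=
      ⟨fun i => w (Sum.inl i), w (Sum.inr ()), by ext (i | i) <;> rfl⟩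
    have hval : star (Sum.elim u fun _ => y) ⬝ᵥ (Matrix.fromBlocks M
        (Matrix.of fun i (_ : Unit) => -b i) (Matrix.of fun (_ : Unit) j => -b j)
        (Matrix.of fun _ _ => τ)) *ᵥ (Sum.elim u fun _ => y) =
        u ⬝ᵥ M *ᵥ u - 2 * y * (b ⬝ᵥ u) + τ * y ^ 2 := by
      have hcol : (Matrix.of fun i (_ : Unit) => -b i) *ᵥ (fun _ => y) = -y • b := by
        ext i
        simp [Matrix.mulVec, dotProduct, mul_comm]
      have hrow : (Matrix.of fun (_ : Unit) j => -b j) *ᵥ u = fun _ => -(b ⬝ᵥ u) := by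
        ext i
        simp [Matrix.mulVec, dotProduct]
      have hcorner : (Matrix.of fun (_ _ : Unit) => τ) *ᵥ (fun _ => y) = fun _ => τ * y := by
        ext i
        simp [Matrix.mulVec, dotProduct]
      rw [star_trivial, Matrix.fromBlocks_mulVec, Sum.elim_comp_inl, Sum.elim_comp_inr,
        sumElim_dotProduct_sumElim, hcol, hrow, hcorner, dotProduct_add, dotProduct_smul,
        dotProduct_comm u b]
      simp only [smul_eq_mul, dotProduct, Pi.add_apply, Finset.univ_unique,
        Finset.sum_singleton]
      ring
    rw [hval]
    have hscale : ∀ s : ℝ, 0 ≤ s ^ 2 * (u ⬝ᵥ M *ᵥ u) - 2 * s * (b ⬝ᵥ u) + τ := by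
      intro s
      have := h (s • u)
      simp only [Matrix.mulVec_smul, dotProduct_smul, smul_dotProduct, smul_eq_mul] at this
      linarith
    rcases eq_or_ne y 0 with h0 | h0
    · rw [h0]
      suffices 0 ≤ u ⬝ᵥ M *ᵥ u by linarith
      by_contra! hneg
      set α := u ⬝ᵥ M *ᵥ u
      set r := (|τ| + 1) / (-α) with hr
      have hr0 : 0 ≤ r := div_nonneg (by positivity) (by linarith)
      have hrα : r * α = -(|τ| + 1) := by
        have hne := hneg.ne
        rw [hr]
        field_simp
      have h1 := hscale (r + 1)
      have h2 := hscale (-(r + 1))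
      have h3 : (r + 1) ^ 2 * α = -(r * (|τ| + 1)) + 2 * (r * α) + α := by
        linear_combination r * hrα
      have h4 : 0 ≤ r * (|τ| + 1) := by positivity
      have h5 : (-(r + 1)) ^ 2 * α = (r + 1) ^ 2 * α := by ring
      linarith [le_abs_self τ, abs_nonneg τ]
    · have := mul_nonneg (sq_nonneg y) (hscale y⁻¹)
      refine this.trans_eq ?_
      field_simp

theorem stmt5 {n nb K : ℕ} (hK : 1 ≤ K)
    (P : Matrix (Fin n) (Fin nb) ℝ)
    (S : Fin K → Matrix (Fin nb) (Fin nb) ℝ)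
    (hS : ∀ k, (S k).PosSemidef)
    (hSsum : (∑ k, S k).PosDef)
    (T : Set (Fin K → ℝ))
    (hTne : T.Nonempty) (hTconv : Convex ℝ T) (hTcomp : IsCompact T)
    (hTnonneg : ∀ t ∈ T, ∀ k, 0 ≤ t k)
    (hTmono : ∀ t t' : Fin K → ℝ, (∀ k, 0 ≤ t k) → (∀ k, t k ≤ t' k) → t' ∈ T → t ∈ T)
    (hTpos : ∃ t ∈ T, ∀ k, 0 < t k)
    (ρ : ℝ) (hρ : 0 < ρ)
    (X : Matrix (Fin n) (Fin n) ℝ) (hX : X.IsSymm) (x : Fin n → ℝ) (ξ : ℝ)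
    (hrob : ∀ ζ ∈ ellitope P S T (3 * Real.log (6 * K) * ρ),
      ζ ⬝ᵥ X *ᵥ ζ + 2 * (x ⬝ᵥ ζ) ≤ ξ) :
    ∃ lam : Fin K → ℝ, ∃ τ : ℝ, (∀ k, 0 ≤ lam k) ∧
      (Matrix.fromBlocks ((∑ k, lam k • S k) - Pᵀ * X * P)
        (Matrix.of fun i (_ : Unit) => -(Pᵀ *ᵥ x) i)
        (Matrix.of fun (_ : Unit) j => -(Pᵀ *ᵥ x) j)
        (Matrix.of fun _ _ => τ)).PosSemidef ∧
      ρ * suppFn T lam + τ ≤ ξ := by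
  obtain ⟨t₀, ht₀, ht₀pos⟩ := hTpos
  have hQ : (Pᵀ * X * P).IsSymm := by
    rw [Matrix.IsSymm, Matrix.transpose_mul, Matrix.transpose_mul, Matrix.transpose_transpose,
      hX.eq, Matrix.mul_assoc]
  have hquad : ∀ z : Fin nb → ℝ,
      (P *ᵥ z) ⬝ᵥ X *ᵥ (P *ᵥ z) = z ⬝ᵥ (Pᵀ * X * P) *ᵥ z := by
    intro z
    rw [Matrix.mul_assoc, ← Matrix.mulVec_mulVec, ← Matrix.mulVec_mulVec,
      Matrix.dotProduct_mulVec z, Matrix.vecMul_transpose]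
  have hlin : ∀ z : Fin nb → ℝ, x ⬝ᵥ (P *ᵥ z) = (Pᵀ *ᵥ x) ⬝ᵥ z := by
    intro z
    rw [Matrix.dotProduct_mulVec, Matrix.mulVec_transpose]
  obtain ⟨lam, hlam, hdual⟩ := exists_multipliers
    (fun (w : (Fin nb → ℝ) × T) k => w.1 ⬝ᵥ S k *ᵥ w.1 - ρ * w.2.1 k)
    (fun w => w.1 ⬝ᵥ (Pᵀ * X * P) *ᵥ w.1 + 2 * ((Pᵀ *ᵥ x) ⬝ᵥ w.1)) ξ
    (by
      intro y hy hneg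
      obtain ⟨ι, hι, p, z, hp, hp1, hz, rfl⟩ := mem_convexHull_iff_exists_fintype.mp hy
      choose w hw using hz
      simp only [← hw, Prod.fst_sum, Prod.snd_sum, Prod.smul_fst, Prod.smul_snd,
        Finset.sum_apply, Pi.smul_apply, smul_eq_mul] at hneg ⊢
      have ht : ∑ i, p i • (w i).2.1 ∈ T :=
        hTconv.sum_mem (fun i _ => hp i) hp1 fun i _ => (w i).2.2
      refine sum_weighted_le_of_forall_quadratic_le hK hS hQ (Pᵀ *ᵥ x) ξ
        (fun k => ρ * (∑ i, p i • (w i).2.1) k) ?_ hp hp1 (fun i => (w i).1) ?_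
      · intro z hz
        rw [← hquad, ← hlin]
        exact hrob _ ⟨z, _, ht, rfl, fun k => (hz k).trans_eq (by ring)⟩
      · intro k
        have h := (hneg k).le
        simp only [mul_sub, Finset.sum_sub_distrib, sub_nonpos] at h
        refine h.trans_eq ?_
        simp only [Finset.sum_apply, Pi.smul_apply, smul_eq_mul, Finset.mul_sum]
        exact Finset.sum_congr rfl fun i _ => by ring)
    ⟨(0, ⟨t₀, ht₀⟩), fun k => by simpa using mul_pos hρ (ht₀pos k)⟩
  refine ⟨lam, ξ - ρ * suppFn T lam, hlam, ?_, by linarith⟩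
  refine posSemidef_bordered ?_ _ _ fun u => ?_
  · refine Matrix.IsSymm.sub ?_ hQ
    rw [Matrix.IsSymm, Matrix.transpose_sum]
    refine Finset.sum_congr rfl fun k _ => ?_
    have := (hS k).isHermitian
    rw [Matrix.IsHermitian, Matrix.conjTranspose_eq_transpose_of_trivial] at this
    rw [Matrix.transpose_smul, this]
  · have hsum : u ⬝ᵥ (∑ k, lam k • S k) *ᵥ u = ∑ k, lam k * (u ⬝ᵥ S k *ᵥ u) := by
      rw [Matrix.sum_mulVec, dotProduct_sum]
      simp [Matrix.smul_mulVec]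
    have hsup : suppFn T lam ≤ (ξ - (u ⬝ᵥ (Pᵀ * X * P) *ᵥ u + 2 * ((Pᵀ *ᵥ x) ⬝ᵥ u)) +
        ∑ k, lam k * (u ⬝ᵥ S k *ᵥ u)) / ρ := by
      refine csSup_le (hTne.image _) ?_
      rintro _ ⟨t, ht, rfl⟩
      have h := hdual (u, ⟨t, ht⟩)
      simp only [mul_sub, Finset.sum_sub_distrib] at h
      have hcomm : ∑ k, lam k * (ρ * t k) = (∑ k, lam k * t k) * ρ := by
        rw [Finset.sum_mul]
        exact Finset.sum_congr rfl fun k _ => by ring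
      rw [le_div_iff₀ hρ]
      linarith
    rw [le_div_iff₀ hρ] at hsup
    rw [Matrix.sub_mulVec, dotProduct_sub, hsum]
    linarith
end
end

section
/- Let K ≥ 1 be an integer, P a real n×n̄ matrix, and for each k ≤ K let f_k ≥ 1 and S^{k1},…,S^{k n̄} be symmetric f_k×f_k matrices defining S_k[z] = ∑_i z_i S^{ki}, such that z = 0 whenever S_k[z] = 0 for all k; let 𝒯 ⊆ ℝ_{≥0}^K be a nonempty convex compact monotone set containing a point with all coordinates positive, and ρ > 0. Let X be a symmetric n×n matrix, x ∈ ℝ^n, ξ ∈ ℝ. If there exist positive semidefinite Λ_k ∈ S^{f_k} (k = 1,…,K) and τ ∈ ℝ such that [[∑_k 𝒮_k^*[Λ_k] − PᵀXP, −Pᵀx],[−xᵀP, τ]] is positive semidefinite and ρ·φ_𝒯(λ[Λ]) + τ ≤ ξ, then for every ζ ∈ 𝒳[ρ] one has ζᵀXζ + 2xᵀζ ≤ ξ. -/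
open Matrix BigOperators

noncomputable section

/-- The spectratope `𝒳[s]`: image under `z ↦ P z` of the set of `z` such that
`S_k[z]² ⪯ s t_k I` for some `t ∈ 𝒯`, where `S_k[z] = ∑ i z_i S^{ki}`. -/
def spectratope {n nb K : ℕ} (f : Fin K → ℕ) (P : Matrix (Fin n) (Fin nb) ℝ)
    (Smat : (k : Fin K) → Fin nb → Matrix (Fin (f k)) (Fin (f k)) ℝ)
    (T : Set (Fin K → ℝ)) (s : ℝ) : Set (Fin n → ℝ) :=
  {x | ∃ z : Fin nb → ℝ, ∃ t ∈ T, x = P *ᵥ z ∧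
    ∀ k, ((s * t k) • (1 : Matrix (Fin (f k)) (Fin (f k)) ℝ)
            - (∑ i, z i • Smat k i) ^ 2).PosSemidef}

/-- `𝒮_k^*[Λ]`, the matrix with entries `Tr(Λ (S^{ki} S^{kj} + S^{kj} S^{ki})/2)`. -/
def calSstar {nb fk : ℕ} (Sm : Fin nb → Matrix (Fin fk) (Fin fk) ℝ)
    (Λ : Matrix (Fin fk) (Fin fk) ℝ) : Matrix (Fin nb) (Fin nb) ℝ :=
  Matrix.of fun i j => (Λ * ((1 / 2 : ℝ) • (Sm i * Sm j + Sm j * Sm i))).trace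

/-- `λ[Λ] = (Tr Λ_1, …, Tr Λ_K)`. -/
def lamOf {K : ℕ} {f : Fin K → ℕ}
    (Λ : (k : Fin K) → Matrix (Fin (f k)) (Fin (f k)) ℝ) : Fin K → ℝ :=
  fun k => (Λ k).trace

open scoped MatrixOrder in
/-- The trace of a product of two positive semidefinite real matrices is nonnegative. -/
theorem Matrix.PosSemidef.trace_mul_nonneg_real {m : Type*} [Fintype m] [DecidableEq m]
    {A B : Matrix m m ℝ} (hA : A.PosSemidef) (hB : B.PosSemidef) : 0 ≤ (A * B).trace := by
  obtain ⟨C, rfl⟩ := CStarAlgebra.nonneg_iff_eq_star_mul_self.mp hA.nonneg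
  rw [Matrix.star_eq_conjTranspose]
  rw [Matrix.mul_assoc, Matrix.trace_mul_comm]
  exact (hB.mul_mul_conjTranspose_same C).trace_nonneg

/-- The quadratic form of `𝒮^*[Λ]` at `z` is `Tr(Λ S[z]²)`. -/
theorem dotProduct_calSstar_mulVec {nb fk : ℕ} (Sm : Fin nb → Matrix (Fin fk) (Fin fk) ℝ)
    (Λ : Matrix (Fin fk) (Fin fk) ℝ) (z : Fin nb → ℝ) :
    z ⬝ᵥ calSstar Sm Λ *ᵥ z = (Λ * (∑ i, z i • Sm i) ^ 2).trace := by
  have expand : (Λ * (∑ i, z i • Sm i) ^ 2).trace =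
      ∑ i, ∑ j, z i * z j * (Λ * (Sm i * Sm j)).trace := by
    simp only [pow_two, Finset.sum_mul, Finset.mul_sum, trace_sum, smul_mul_assoc,
      mul_smul_comm, trace_smul, smul_eq_mul]
    rw [Finset.sum_comm]
    exact Finset.sum_congr rfl fun i _ => Finset.sum_congr rfl fun j _ => by ring
  have swap : ∑ i, ∑ j, z i * z j * (Λ * (Sm j * Sm i)).trace =
      ∑ i, ∑ j, z i * z j * (Λ * (Sm i * Sm j)).trace := by
    rw [Finset.sum_comm]
    exact Finset.sum_congr rfl fun i _ => Finset.sum_congr rfl fun j _ => by ring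
  have average : z ⬝ᵥ calSstar Sm Λ *ᵥ z =
      (1 / 2) * ((∑ i, ∑ j, z i * z j * (Λ * (Sm i * Sm j)).trace) +
        ∑ i, ∑ j, z i * z j * (Λ * (Sm j * Sm i)).trace) := by
    simp only [dotProduct, mulVec, calSstar, of_apply, mul_smul_comm, mul_add, trace_smul,
      trace_add, smul_eq_mul, ← Finset.sum_add_distrib, Finset.mul_sum]
    exact Finset.sum_congr rfl fun i _ => Finset.sum_congr rfl fun j _ => by ring
  rw [average, swap, expand]
  ring

/-- On a compact set the support function dominates each linear value. -/
theorem le_suppFn {K : ℕ} {T : Set (Fin K → ℝ)} (hT : IsCompact T) (lam : Fin K → ℝ)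
    {t : Fin K → ℝ} (ht : t ∈ T) : ∑ k, lam k * t k ≤ suppFn T lam :=
  le_csSup (hT.image (by fun_prop)).bddAbove (Set.mem_image_of_mem _ ht)

theorem stmt6 {n nb K : ℕ} (hK : 1 ≤ K)
    (P : Matrix (Fin n) (Fin nb) ℝ)
    (f : Fin K → ℕ) (hf : ∀ k, 1 ≤ f k)
    (Smat : (k : Fin K) → Fin nb → Matrix (Fin (f k)) (Fin (f k)) ℝ)
    (hSm : ∀ k i, (Smat k i).IsSymm)
    (hnd : ∀ z : Fin nb → ℝ, (∀ k, (∑ i, z i • Smat k i) = 0) → z = 0)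
    (T : Set (Fin K → ℝ))
    (hTne : T.Nonempty) (hTconv : Convex ℝ T) (hTcomp : IsCompact T)
    (hTnonneg : ∀ t ∈ T, ∀ k, 0 ≤ t k)
    (hTmono : ∀ t t' : Fin K → ℝ, (∀ k, 0 ≤ t k) → (∀ k, t k ≤ t' k) → t' ∈ T → t ∈ T)
    (hTpos : ∃ t ∈ T, ∀ k, 0 < t k)
    (ρ : ℝ) (hρ : 0 < ρ)
    (X : Matrix (Fin n) (Fin n) ℝ) (hX : X.IsSymm) (x : Fin n → ℝ) (ξ : ℝ)
    (hfeas : ∃ Λ : (k : Fin K) → Matrix (Fin (f k)) (Fin (f k)) ℝ, ∃ τ : ℝ,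
      (∀ k, (Λ k).PosSemidef) ∧
      (Matrix.fromBlocks ((∑ k, calSstar (Smat k) (Λ k)) - Pᵀ * X * P)
        (Matrix.of fun i (_ : Unit) => -(Pᵀ *ᵥ x) i)
        (Matrix.of fun (_ : Unit) j => -(Pᵀ *ᵥ x) j)
        (Matrix.of fun _ _ => τ)).PosSemidef ∧
      ρ * suppFn T (lamOf Λ) + τ ≤ ξ) :
    ∀ ζ ∈ spectratope f P Smat T ρ, ζ ⬝ᵥ X *ᵥ ζ + 2 * (x ⬝ᵥ ζ) ≤ ξ := by
  obtain ⟨Λ, τ, hΛ, hM, hξ⟩ := hfeas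
  rintro ζ ⟨z, t, ht, rfl, hz⟩
  have trace_bound : ∀ k, z ⬝ᵥ calSstar (Smat k) (Λ k) *ᵥ z ≤ ρ * (lamOf Λ k * t k) := by
    intro k
    have h := (hΛ k).trace_mul_nonneg_real (hz k)
    rw [mul_sub, trace_sub, mul_smul_comm, mul_one, trace_smul, smul_eq_mul,
      ← dotProduct_calSstar_mulVec] at h
    simp only [lamOf]
    linarith
  have sum_bound : z ⬝ᵥ (∑ k, calSstar (Smat k) (Λ k)) *ᵥ z ≤ ρ * suppFn T (lamOf Λ) := by
    rw [sum_mulVec, dotProduct_sum]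
    refine (Finset.sum_le_sum fun k _ => trace_bound k).trans ?_
    rw [← Finset.mul_sum]
    exact mul_le_mul_of_nonneg_left (le_suppFn hTcomp _ ht) hρ.le
  have block_nonneg := hM.dotProduct_mulVec_nonneg (Sum.elim z fun _ => 1)
  have row_form : (of fun (_ : Unit) j => -(Pᵀ *ᵥ x) j) *ᵥ z = fun _ => -(x ⬝ᵥ P *ᵥ z) := by
    ext
    rw [dotProduct_mulVec, ← mulVec_transpose, ← neg_dotProduct]
    rfl
  have col_form : (of fun i (_ : Unit) => -(Pᵀ *ᵥ x) i) *ᵥ (fun _ => (1 : ℝ)) =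
      -(Pᵀ *ᵥ x) := by
    ext
    simp [mulVec, dotProduct]
  have cross : z ⬝ᵥ Pᵀ *ᵥ x = x ⬝ᵥ P *ᵥ z := by
    rw [dotProduct_mulVec x, ← mulVec_transpose, dotProduct_comm]
  have quad : z ⬝ᵥ (Pᵀ * X * P) *ᵥ z = (P *ᵥ z) ⬝ᵥ X *ᵥ (P *ᵥ z) := by
    rw [← mulVec_mulVec, ← mulVec_mulVec, dotProduct_mulVec z, vecMul_transpose]
  have corner : (of fun (_ : Unit) (_ : Unit) => τ) *ᵥ (fun _ => (1 : ℝ)) = fun _ => τ := by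
    ext
    simp [mulVec, dotProduct]
  have unit_dot : ∀ a : ℝ, (fun _ : Unit => (1 : ℝ)) ⬝ᵥ (fun _ => a) = a := by
    simp [dotProduct]
  rw [star_trivial, fromBlocks_mulVec, Sum.elim_comp_inl, Sum.elim_comp_inr,
    sumElim_dotProduct_sumElim, dotProduct_add, dotProduct_add, row_form, col_form, corner,
    unit_dot, unit_dot, dotProduct_neg, cross, sub_mulVec, dotProduct_sub, quad] at block_nonneg
  linarith
end
end

section
/- Let K ≥ 1 be an integer, P a real n×n̄ matrix, and for each k ≤ K let f_k ≥ 1 and S^{k1},…,S^{k n̄} be symmetric f_k×f_k matrices defining S_k[z] = ∑_i z_i S^{ki}, such that z = 0 whenever S_k[z] = 0 for all k; let 𝒯 ⊆ ℝ_{≥0}^K be a nonempty convex compact monotone set containing a point with all coordinates positive, and ρ > 0. Let X be a symmetric n×n matrix, x ∈ ℝ^n, ξ ∈ ℝ, and set κ = 2·ln(8·(f_1+⋯+f_K)). If ζᵀXζ + 2xᵀζ ≤ ξ holds for every ζ ∈ 𝒳[κ·ρ], then there exist positive semidefinite Λ_k ∈ S^{f_k} (k = 1,…,K) and τ ∈ ℝ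 such that [[∑_k 𝒮_k^*[Λ_k] − PᵀXP, −Pᵀx],[−xᵀP, τ]] is positive semidefinite and ρ·φ_𝒯(λ[Λ]) + τ ≤ ξ. -/
open Matrix BigOperators

noncomputable section

/-- The Rademacher sum `∑ i, ε i • A i` attached to a sign pattern `ε`. -/
def signSum {ι E : Type*} [Fintype ι] [AddCommGroup E] [Module ℝ E] (A : ι → E) (ε : ι → ℤˣ) : E :=
  ∑ i, ((ε i : ℤ) : ℝ) • A i

/-- Flipping the `i`-th sign, as a permutation of the sign patterns. -/
def flipSign {ι : Type*} [DecidableEq ι] (i : ι) : (ι → ℤˣ) ≃ (ι → ℤˣ) :=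
  Equiv.mulRight (Pi.mulSingle i (-1))

lemma signSum_neg {ι E : Type*} [Fintype ι] [AddCommGroup E] [Module ℝ E] (A : ι → E)
    (ε : ι → ℤˣ) : signSum A (-ε) = -signSum A ε := by
  simp [signSum]

lemma flipSign_apply_self {ι : Type*} [DecidableEq ι] (i : ι) (ε : ι → ℤˣ) :
    flipSign i ε i = -ε i := by
  simp [flipSign]

lemma signSum_sub_signSum_flipSign {ι E : Type*} [Fintype ι] [DecidableEq ι] [AddCommGroup E]
    [Module ℝ E] (A : ι → E) (i : ι) (ε : ι → ℤˣ) :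
    signSum A ε - signSum A (flipSign i ε) = (2 * ((ε i : ℤ) : ℝ)) • A i := by
  rw [signSum, signSum, ← Finset.sum_sub_distrib, Finset.sum_eq_single i]
  · rw [flipSign_apply_self, ← sub_smul]
    congr 1
    push_cast
    ring
  · intro j _ hj
    simp [flipSign, Pi.mulSingle_eq_of_ne hj]
  · simp

/-- Integration by parts for a Rademacher variable. -/
lemma two_mul_sum_sign_mul {ι : Type*} [Fintype ι] [DecidableEq ι] (i : ι)
    (g : (ι → ℤˣ) → ℝ) :
    2 * ∑ ε : ι → ℤˣ, ((ε i : ℤ) : ℝ) * g ε =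
      ∑ ε : ι → ℤˣ, ((ε i : ℤ) : ℝ) * (g ε - g (flipSign i ε)) := by
  have h := Equiv.sum_comp (flipSign i) (fun ε : ι → ℤˣ => ((ε i : ℤ) : ℝ) * g ε)
  simp only [flipSign_apply_self, Units.val_neg, Int.cast_neg, neg_mul,
    Finset.sum_neg_distrib] at h
  simp only [mul_sub, Finset.sum_sub_distrib]
  linarith

lemma intUnit_cast_mul_self (u : ℤˣ) : ((u : ℤ) : ℝ) * ((u : ℤ) : ℝ) = 1 := by
  rcases Int.units_eq_one_or u with rfl | rfl <;> simp

lemma sum_signSum_sq {ι : Type*} [Fintype ι] [DecidableEq ι] (b : ι → ℝ) :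
    ∑ ε : ι → ℤˣ, (signSum b ε) ^ 2 = Fintype.card (ι → ℤˣ) * ∑ i, b i ^ 2 := by
  have key : ∀ i, ∑ ε : ι → ℤˣ, ((ε i : ℤ) : ℝ) * (b i * signSum b ε) =
      Fintype.card (ι → ℤˣ) * b i ^ 2 := by
    intro i
    have h := two_mul_sum_sign_mul i (fun ε => b i * signSum b ε)
    simp only [← mul_sub, signSum_sub_signSum_flipSign, smul_eq_mul] at h
    have : ∀ ε : ι → ℤˣ, ((ε i : ℤ) : ℝ) * (b i * (2 * ((ε i : ℤ) : ℝ) * b i)) = 2 * b i ^ 2 := by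
      intro ε
      linear_combination (2 * b i ^ 2) * intUnit_cast_mul_self (ε i)
    simp only [this, Finset.sum_const, Finset.card_univ, nsmul_eq_mul] at h
    linarith
  calc ∑ ε : ι → ℤˣ, (signSum b ε) ^ 2
      = ∑ ε : ι → ℤˣ, ∑ i, ((ε i : ℤ) : ℝ) * (b i * signSum b ε) := by
        refine Finset.sum_congr rfl fun ε _ => ?_
        simp only [← mul_assoc]
        rw [← Finset.sum_mul, sq]
        rfl
    _ = _ := by rw [Finset.sum_comm, Finset.mul_sum]; exact Finset.sum_congr rfl fun i _ => key i

lemma card_signSum_gt_mul_sq_le {ι : Type*} [Fintype ι] [DecidableEq ι] (b : ι → ℝ) {c : ℝ}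
    (hc : 0 ≤ c) :
    (Finset.card {ε : ι → ℤˣ | c < |signSum b ε|} : ℝ) * c ^ 2 ≤
      Fintype.card (ι → ℤˣ) * ∑ i, b i ^ 2 := by
  rw [← sum_signSum_sq, ← nsmul_eq_mul]
  refine (Finset.card_nsmul_le_sum _ (fun ε => signSum b ε ^ 2) _ fun ε hε => ?_).trans
    (Finset.sum_le_sum_of_subset_of_nonneg (Finset.filter_subset _ _) fun _ _ _ => sq_nonneg _)
  rw [← sq_abs (signSum b ε)]
  exact pow_le_pow_left₀ hc (Finset.mem_filter.1 hε).2.le 2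

lemma card_pred_neg {ι : Type*} [Fintype ι] [DecidableEq ι] (p : (ι → ℤˣ) → Prop)
    [DecidablePred p] :
    Finset.card {ε : ι → ℤˣ | p (-ε)} = Finset.card {ε : ι → ℤˣ | p ε} := by
  refine Finset.card_bij (fun ε _ => -ε) (by simp) (fun a _ b _ h => neg_injective h) ?_
  intro b hb
  exact ⟨-b, by simpa using hb, by simp⟩

/-- If `|s| ≤ 1` and `|s| + h > 1`, where `h` and the coefficients `b` satisfy
`∑ b_i² ≤ 1 - h²`, then `|s + ∑ ε_i b_i| ≤ 1` for at least a third of the sign patterns. -/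
lemma card_le_three_mul_card_of_one_lt {ι : Type*} [Fintype ι] [DecidableEq ι] (b : ι → ℝ)
    {s h : ℝ} (hs : |s| ≤ 1) (hsh : 1 < |s| + h) (hh : 0 ≤ h) (hb : ∑ i, b i ^ 2 ≤ 1 - h ^ 2) :
    (Fintype.card (ι → ℤˣ) : ℝ) ≤ 3 * Finset.card {ε : ι → ℤˣ | |s + signSum b ε| ≤ 1} := by
  wlog hs0 : 0 ≤ s generalizing s
  · have := this (s := -s) (by simpa) (by simpa) (by linarith)
    rw [← card_pred_neg] at this
    refine this.trans_eq ?_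
    simp only [signSum_neg, ← neg_add, abs_neg]
  rw [abs_of_nonneg hs0] at hs hsh
  have hh1 : h ≤ 1 := by
    have : 0 ≤ ∑ i, b i ^ 2 := Finset.sum_nonneg fun i _ => sq_nonneg _
    nlinarith
  set N : ℝ := (Fintype.card (ι → ℤˣ) : ℝ) with hN
  have hN0 : 0 ≤ N := Nat.cast_nonneg _
  set B : ℝ := (Finset.card {ε : ι → ℤˣ | 2 - h < |signSum b ε|} : ℝ) with hB
  have hcheb : B * (2 - h) ^ 2 ≤ N * (1 - h ^ 2) :=
    (card_signSum_gt_mul_sq_le b (by linarith)).trans (by gcongr)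
  have hB3 : 3 * B ≤ N := by
    have h1 : N * (3 * (1 - h ^ 2)) ≤ N * (2 - h) ^ 2 :=
      mul_le_mul_of_nonneg_left (by nlinarith [sq_nonneg (2 * h - 1)]) hN0
    have h2 : (3 * B) * (2 - h) ^ 2 ≤ N * (2 - h) ^ 2 := by linarith
    exact le_of_mul_le_mul_right h2 (by nlinarith)
  set G := ({ε : ι → ℤˣ | |s + signSum b ε| ≤ 1} : Finset (ι → ℤˣ)) with hG
  set G' := ({ε : ι → ℤˣ | |s + signSum b (-ε)| ≤ 1} : Finset (ι → ℤˣ)) with hG'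
  have hGG : G'.card = G.card := card_pred_neg fun ε => |s + signSum b ε| ≤ 1
  have hcover : (Finset.univ : Finset (ι → ℤˣ)) ⊆
      (G ∪ G') ∪ ({ε : ι → ℤˣ | 2 - h < |signSum b ε|} : Finset (ι → ℤˣ)) := by
    intro ε _
    simp only [hG, hG', Finset.mem_union, Finset.mem_filter, Finset.mem_univ, true_and,
      signSum_neg]
    by_contra! hcon
    obtain ⟨⟨h1, h2⟩, h3⟩ := hcon
    rcases le_total 0 (signSum b ε) with h0 | h0
    · rw [abs_of_nonneg h0] at h3
      refine absurd h2 (not_lt.2 (abs_le.2 ⟨?_, ?_⟩)) <;> linarith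
    · rw [abs_of_nonpos h0] at h3
      refine absurd h1 (not_lt.2 (abs_le.2 ⟨?_, ?_⟩)) <;> linarith
  have hcard := (Finset.card_le_card hcover).trans
    ((Finset.card_union_le _ _).trans (Nat.add_le_add_right (Finset.card_union_le _ _) _))
  rw [hGG, Finset.card_univ] at hcard
  have hcard' : N ≤ G.card + G.card + B := by
    rw [hN, hB]
    exact_mod_cast hcard
  linarith

lemma card_filter_cons {m : ℕ} (p : (Fin (m + 1) → ℤˣ) → Prop) [DecidablePred p] :
    Finset.card {ε : Fin (m + 1) → ℤˣ | p ε} =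
      Finset.card {ε : Fin m → ℤˣ | p (Fin.cons 1 ε)} +
        Finset.card {ε : Fin m → ℤˣ | p (Fin.cons (-1) ε)} := by
  simp only [Finset.card_filter]
  rw [← (Fin.consEquiv fun _ => ℤˣ).sum_comp, Fintype.sum_prod_type]
  rw [UnitsInt.univ, Finset.sum_pair (by decide)]
  rfl

lemma signSum_cons {m : ℕ} (b : Fin (m + 1) → ℝ) (u : ℤˣ) (ε : Fin m → ℤˣ) :
    signSum b (Fin.cons u ε : Fin (m + 1) → ℤˣ) =
      ((u : ℤ) : ℝ) * b 0 + signSum (fun i => b i.succ) ε := by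
  simp [signSum, Fin.sum_univ_succ]

lemma card_cons_signs (m : ℕ) :
    (Fintype.card (Fin (m + 1) → ℤˣ) : ℝ) = 2 * Fintype.card (Fin m → ℤˣ) := by
  simp [pow_succ, mul_comm]

lemma card_le_three_mul_card_of_antitone {m : ℕ} (b : Fin m → ℝ) (hanti : Antitone b)
    (hb0 : ∀ i, 0 ≤ b i) {s : ℝ} (hs : |s| ≤ 1) (hb : ∀ i, ∑ j, b j ^ 2 ≤ 1 - b i ^ 2) :
    (Fintype.card (Fin m → ℤˣ) : ℝ) ≤
      3 * Finset.card {ε : Fin m → ℤˣ | |s + signSum b ε| ≤ 1} := by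
  induction m generalizing s with
  | zero => simp [signSum, hs]
  | succ m ih =>
    by_cases hsh : 1 < |s| + b 0
    · exact card_le_three_mul_card_of_one_lt b hs hsh (hb0 0) (hb 0)
    · have hstep : ∀ u : ℤˣ, |s + ((u : ℤ) : ℝ) * b 0| ≤ 1 := by
        intro u
        refine (abs_add_le _ _).trans ?_
        rcases Int.units_eq_one_or u with rfl | rfl <;>
          simpa [abs_of_nonneg (hb0 0)] using hsh
      have htail : ∀ i : Fin m, ∑ j : Fin m, b j.succ ^ 2 ≤ 1 - b i.succ ^ 2 := by
        intro i
        have h0 := hb 0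
        rw [Fin.sum_univ_succ] at h0
        have h1 : b i.succ ^ 2 ≤ b 0 ^ 2 :=
          pow_le_pow_left₀ (hb0 _) (hanti (Fin.zero_le _)) 2
        nlinarith [sq_nonneg (b 0)]
      have hrec := fun u : ℤˣ => ih (fun i => b i.succ)
        (hanti.comp_monotone (Fin.strictMono_succ).monotone) (fun i => hb0 _) (hstep u) htail
      rw [card_filter_cons, card_cons_signs]
      have h1 := hrec 1
      have h2 := hrec (-1)
      simp only [signSum_cons, ← add_assoc]
      push_cast
      push_cast at h1 h2
      linarith

lemma card_le_three_mul_card_of_antitone_of_sum_sq_le_one {m : ℕ} (b : Fin m → ℝ)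
    (hanti : Antitone b) (hb0 : ∀ i, 0 ≤ b i) (hb : ∑ i, b i ^ 2 ≤ 1) :
    (Fintype.card (Fin m → ℤˣ) : ℝ) ≤ 3 * Finset.card {ε : Fin m → ℤˣ | |signSum b ε| ≤ 1} := by
  cases m with
  | zero => simp [signSum]
  | succ m =>
    rw [Fin.sum_univ_succ] at hb
    have htail : ∀ i : Fin m, ∑ j : Fin m, b j.succ ^ 2 ≤ 1 - b i.succ ^ 2 := by
      intro i
      have h1 : b i.succ ^ 2 ≤ b 0 ^ 2 :=
        pow_le_pow_left₀ (hb0 _) (hanti (Fin.zero_le _)) 2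
      linarith
    have hb1 : b 0 ≤ 1 := by
      have : 0 ≤ ∑ j : Fin m, b j.succ ^ 2 := Finset.sum_nonneg fun _ _ => sq_nonneg _
      nlinarith [hb0 0]
    have hrec := fun u : ℤˣ => card_le_three_mul_card_of_antitone (fun i => b i.succ)
      (hanti.comp_monotone (Fin.strictMono_succ).monotone) (fun i => hb0 _)
      (s := ((u : ℤ) : ℝ) * b 0)
      (by rcases Int.units_eq_one_or u with rfl | rfl <;> simpa [abs_of_nonneg (hb0 0)])
      htail
    rw [card_filter_cons, card_cons_signs]
    have h1 := hrec 1
    have h2 := hrec (-1)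
    simp only [signSum_cons]
    push_cast
    push_cast at h1 h2
    linarith

lemma exists_intUnit_mul_abs (r : ℝ) : ∃ u : ℤˣ, r = ((u : ℤ) : ℝ) * |r| := by
  rcases le_total 0 r with h | h
  · exact ⟨1, by simp [abs_of_nonneg h]⟩
  · exact ⟨-1, by simp [abs_of_nonpos h]⟩

/-- A normalized Rademacher sum lies in `[-1, 1]` with probability at least `1/3`. -/
lemma card_le_three_mul_card_abs_signSum_le_one {ι : Type*} [Fintype ι] [DecidableEq ι]
    (b : ι → ℝ) (hb : ∑ i, b i ^ 2 ≤ 1) :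
    (Fintype.card (ι → ℤˣ) : ℝ) ≤ 3 * Finset.card {ε : ι → ℤˣ | |signSum b ε| ≤ 1} := by
  set e₀ : Fin (Fintype.card ι) ≃ ι := (Fintype.equivFin ι).symm
  set e : Fin (Fintype.card ι) ≃ ι := (Tuple.sort fun i => -|b (e₀ i)|).trans e₀ with he
  have hanti : Antitone fun i => |b (e i)| := fun i j hij =>
    neg_le_neg_iff.1 (Tuple.monotone_sort (fun i => -|b (e₀ i)|) hij)
  choose u hu using fun i => exists_intUnit_mul_abs (b i)
  set Φ : (ι → ℤˣ) ≃ (Fin (Fintype.card ι) → ℤˣ) :=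
    (Equiv.mulRight u).trans (Equiv.arrowCongr e.symm (Equiv.refl ℤˣ)) with hΦ
  have hsum : ∀ ε, signSum (fun i => |b (e i)|) (Φ ε) = signSum b ε := by
    intro ε
    simp only [signSum]
    rw [← e.sum_comp]
    refine Finset.sum_congr rfl fun i _ => ?_
    conv_rhs => rw [hu (e i)]
    simp [hΦ, mul_assoc]
  have h := card_le_three_mul_card_of_antitone_of_sum_sq_le_one _ hanti (fun i => abs_nonneg _)
    (by simpa only [sq_abs, e.sum_comp fun i => b i ^ 2] using hb)
  rw [← Fintype.card_congr Φ, Finset.card_filter, ← Φ.sum_comp] at h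
  simpa only [hsum, ← Finset.card_filter] using h

lemma pow_mul_pow_add_le (a b : ℝ) {q r p : ℕ} (hqr : q + r = 2 * p) :
    a ^ q * b ^ r + a ^ r * b ^ q ≤ a ^ (2 * p) + b ^ (2 * p) := by
  have h1 : a ^ q * b ^ r ≤ |a| ^ q * |b| ^ r := by
    rw [← abs_pow, ← abs_pow, ← abs_mul]; exact le_abs_self _
  have h2 : a ^ r * b ^ q ≤ |a| ^ r * |b| ^ q := by
    rw [← abs_pow, ← abs_pow, ← abs_mul]; exact le_abs_self _
  have h3 : 0 ≤ (|a| ^ q - |b| ^ q) * (|a| ^ r - |b| ^ r) := by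
    rcases le_total |a| |b| with h | h
    · exact mul_nonneg_of_nonpos_of_nonpos
        (sub_nonpos.2 (pow_le_pow_left₀ (abs_nonneg _) h _))
        (sub_nonpos.2 (pow_le_pow_left₀ (abs_nonneg _) h _))
    · exact mul_nonneg (sub_nonneg.2 (pow_le_pow_left₀ (abs_nonneg _) h _))
        (sub_nonneg.2 (pow_le_pow_left₀ (abs_nonneg _) h _))
  have ha : a ^ (2 * p) = |a| ^ q * |a| ^ r := by
    rw [← pow_add, hqr, (even_two_mul p).pow_abs]
  have hb : b ^ (2 * p) = |b| ^ q * |b| ^ r := by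
    rw [← pow_add, hqr, (even_two_mul p).pow_abs]
  rw [ha, hb]
  nlinarith

lemma signSum_isSymm {m ι : Type*} [Fintype ι] {A : ι → Matrix m m ℝ} (hA : ∀ i, (A i).IsSymm) (ε : ι → ℤˣ) :
    (signSum A ε).IsSymm := by
  simp only [signSum, Matrix.IsSymm, transpose_sum, transpose_smul]
  exact Finset.sum_congr rfl fun i _ => by rw [(hA i).eq]

section MatrixMoments

variable {m : Type*} [Fintype m] [DecidableEq m]

/-- Orthogonal diagonalization of a real symmetric matrix. -/
lemma exists_orthogonal_diagonalization (W : Matrix m m ℝ) (hW : W.IsSymm) :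
    ∃ (U : Matrix m m ℝ) (d : m → ℝ), Uᵀ * U = 1 ∧ U * Uᵀ = 1 ∧ W = U * diagonal d * Uᵀ := by
  have hW' : W.IsHermitian := by rwa [Matrix.IsHermitian, conjTranspose_eq_transpose_of_trivial]
  refine ⟨hW'.eigenvectorUnitary, hW'.eigenvalues, ?_, ?_, ?_⟩
  · have := Unitary.coe_star_mul_self hW'.eigenvectorUnitary
    rwa [star_eq_conjTranspose, conjTranspose_eq_transpose_of_trivial] at this
  · have := Unitary.coe_mul_star_self hW'.eigenvectorUnitary
    rwa [Unitary.coe_star, star_eq_conjTranspose, conjTranspose_eq_transpose_of_trivial] at this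
  · have := hW'.spectral_theorem
    rw [Unitary.conjStarAlgAut_apply, star_eq_conjTranspose,
      conjTranspose_eq_transpose_of_trivial] at this
    exact this

lemma conj_diagonal_pow {U : Matrix m m ℝ} {d : m → ℝ} (hU : Uᵀ * U = 1) (hU' : U * Uᵀ = 1)
    (q : ℕ) : (U * diagonal d * Uᵀ) ^ q = U * diagonal (fun i => d i ^ q) * Uᵀ := by
  induction q with
  | zero => simp [hU']
  | succ q ih =>
    rw [pow_succ, ih]
    calc U * diagonal (fun i => d i ^ q) * Uᵀ * (U * diagonal d * Uᵀ)
        = U * diagonal (fun i => d i ^ q) * (Uᵀ * U) * diagonal d * Uᵀ := by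
          simp only [Matrix.mul_assoc]
      _ = U * (diagonal (fun i => d i ^ q) * diagonal d) * Uᵀ := by
          rw [hU, Matrix.mul_one]; simp only [Matrix.mul_assoc]
      _ = _ := by rw [diagonal_mul_diagonal]; simp only [pow_succ]

lemma trace_pow_eq_sum {U : Matrix m m ℝ} {d : m → ℝ} (hU : Uᵀ * U = 1) (hU' : U * Uᵀ = 1)
    (q : ℕ) : ((U * diagonal d * Uᵀ) ^ q).trace = ∑ i, d i ^ q := by
  rw [conj_diagonal_pow hU hU', trace_mul_comm, ← Matrix.mul_assoc, hU, Matrix.one_mul,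
    trace_diagonal]

lemma trace_mul_diagonal_mul_transpose_mul_diagonal (B : Matrix m m ℝ) (d e : m → ℝ) :
    (B * diagonal d * Bᵀ * diagonal e).trace = ∑ i, ∑ j, B i j ^ 2 * (d j * e i) := by
  simp only [trace, diag_apply, mul_diagonal]
  refine Finset.sum_congr rfl fun i _ => ?_
  rw [Matrix.mul_apply, Finset.sum_mul]
  refine Finset.sum_congr rfl fun j _ => ?_
  rw [mul_diagonal, transpose_apply]
  ring

/-- The matrix trace inequality `tr (H W^q H Y^r) + tr (H W^r H Y^q) ≤ tr (H² (W^{q+r} + Y^{q+r}))`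
for symmetric matrices and `q + r` even. -/
lemma trace_geom_mean_le {H W Y : Matrix m m ℝ} (hH : H.IsSymm) (hW : W.IsSymm) (hY : Y.IsSymm)
    {q r p : ℕ} (hqr : q + r = 2 * p) :
    (H * W ^ q * H * Y ^ r).trace + (H * W ^ r * H * Y ^ q).trace ≤
      (H * H * W ^ (2 * p)).trace + (H * H * Y ^ (2 * p)).trace := by
  obtain ⟨U, d, hU, hU', rfl⟩ := exists_orthogonal_diagonalization W hW
  obtain ⟨V, e, hV, hV', rfl⟩ := exists_orthogonal_diagonalization Y hY
  set B := Vᵀ * H * U with hB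
  have key : ∀ a c : ℕ, (H * (U * diagonal d * Uᵀ) ^ a * H * (V * diagonal e * Vᵀ) ^ c).trace =
      ∑ i, ∑ j, B i j ^ 2 * (d j ^ a * e i ^ c) := by
    intro a c
    rw [conj_diagonal_pow hU hU', conj_diagonal_pow hV hV',
      ← trace_mul_diagonal_mul_transpose_mul_diagonal B (fun j => d j ^ a) (fun i => e i ^ c),
      hB, transpose_mul, transpose_mul, transpose_transpose, hH.eq, ← Matrix.mul_assoc _ _ Vᵀ,
      trace_mul_comm]
    simp only [Matrix.mul_assoc]
  have h1 : (H * H * (U * diagonal d * Uᵀ) ^ (2 * p)).trace =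
      (H * (U * diagonal d * Uᵀ) ^ (2 * p) * H * (V * diagonal e * Vᵀ) ^ 0).trace := by
    rw [pow_zero, Matrix.mul_one, trace_mul_comm _ H, Matrix.mul_assoc]
  have h2 : (H * H * (V * diagonal e * Vᵀ) ^ (2 * p)).trace =
      (H * (U * diagonal d * Uᵀ) ^ 0 * H * (V * diagonal e * Vᵀ) ^ (2 * p)).trace := by
    rw [pow_zero, Matrix.mul_one]
  rw [h1, h2, key, key, key, key]
  simp only [← Finset.sum_add_distrib]
  refine Finset.sum_le_sum fun i _ => Finset.sum_le_sum fun j _ => ?_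
  have := mul_le_mul_of_nonneg_left (pow_mul_pow_add_le (d j) (e i) hqr) (sq_nonneg (B i j))
  simp only [pow_zero, mul_one, one_mul]
  linarith

lemma pow_sub_pow_eq_sum {R : Type*} [Ring R] (W Y : R) (k : ℕ) :
    W ^ (k + 1) - Y ^ (k + 1) = ∑ q ∈ Finset.range (k + 1), W ^ q * (W - Y) * Y ^ (k - q) := by
  induction k with
  | zero => simp
  | succ k ih =>
    rw [Finset.sum_range_succ]
    have : ∑ q ∈ Finset.range (k + 1), W ^ q * (W - Y) * Y ^ (k + 1 - q) =
        (∑ q ∈ Finset.range (k + 1), W ^ q * (W - Y) * Y ^ (k - q)) * Y := by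
      rw [Finset.sum_mul]
      refine Finset.sum_congr rfl fun q hq => ?_
      rw [Nat.succ_sub (Nat.lt_succ_iff.1 (Finset.mem_range.1 hq)), pow_succ, ← mul_assoc]
    rw [this, ← ih, Nat.sub_self, pow_zero, mul_one, mul_sub, sub_mul, ← pow_succ, ← pow_succ]
    abel

lemma two_mul_sum_trace_le {H W Y : Matrix m m ℝ} (hH : H.IsSymm) (hW : W.IsSymm) (hY : Y.IsSymm)
    (p : ℕ) :
    2 * ∑ q ∈ Finset.range (2 * p + 1), (H * W ^ q * H * Y ^ (2 * p - q)).trace ≤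
      (2 * p + 1) * ((H * H * W ^ (2 * p)).trace + (H * H * Y ^ (2 * p)).trace) := by
  have hrefl : ∑ q ∈ Finset.range (2 * p + 1), (H * W ^ (2 * p - q) * H * Y ^ q).trace =
      ∑ q ∈ Finset.range (2 * p + 1), (H * W ^ q * H * Y ^ (2 * p - q)).trace := by
    rw [← Finset.sum_range_reflect]
    refine Finset.sum_congr rfl fun q hq => ?_
    have := Finset.mem_range.1 hq
    rw [show 2 * p - (2 * p + 1 - 1 - q) = q by omega, show 2 * p + 1 - 1 - q = 2 * p - q by omega]
  calc 2 * ∑ q ∈ Finset.range (2 * p + 1), (H * W ^ q * H * Y ^ (2 * p - q)).trace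
      = ∑ q ∈ Finset.range (2 * p + 1), ((H * W ^ q * H * Y ^ (2 * p - q)).trace +
          (H * W ^ (2 * p - q) * H * Y ^ q).trace) := by
        rw [Finset.sum_add_distrib, hrefl, two_mul]
    _ ≤ ∑ _q ∈ Finset.range (2 * p + 1),
          ((H * H * W ^ (2 * p)).trace + (H * H * Y ^ (2 * p)).trace) := by
        refine Finset.sum_le_sum fun q hq => trace_geom_mean_le hH hW hY ?_
        have := Finset.mem_range.1 hq
        omega
    _ = _ := by
        rw [Finset.sum_const, Finset.card_range, nsmul_eq_mul]
        push_cast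
        ring

lemma exists_eq_mul_transpose_of_posSemidef {B : Matrix m m ℝ} (hB : B.PosSemidef) :
    ∃ C : Matrix m m ℝ, B = C * Cᵀ := by
  have hsymm : B.IsSymm := by
    rw [Matrix.IsSymm, ← conjTranspose_eq_transpose_of_trivial]; exact hB.isHermitian
  obtain ⟨U, d, hU, hU', rfl⟩ := exists_orthogonal_diagonalization B hsymm
  have hd : ∀ i, 0 ≤ d i := by
    have h := hB.conjTranspose_mul_mul_same U
    rw [conjTranspose_eq_transpose_of_trivial,
      show Uᵀ * (U * diagonal d * Uᵀ) * U = (Uᵀ * U) * diagonal d * (Uᵀ * U) by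
        simp only [Matrix.mul_assoc], hU, Matrix.one_mul, Matrix.mul_one] at h
    exact posSemidef_diagonal_iff.1 h
  refine ⟨U * diagonal fun i => √(d i), ?_⟩
  have hsq : diagonal d = (diagonal fun i => √(d i)) * diagonal fun i => √(d i) := by
    rw [diagonal_mul_diagonal]
    simp only [Real.mul_self_sqrt (hd _)]
  rw [transpose_mul, diagonal_transpose, hsq]
  simp only [Matrix.mul_assoc]

lemma trace_mul_nonneg_of_posSemidef {A B : Matrix m m ℝ} (hA : A.PosSemidef)
    (hB : B.PosSemidef) : 0 ≤ (A * B).trace := by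
  obtain ⟨C, rfl⟩ := exists_eq_mul_transpose_of_posSemidef hB
  rw [← Matrix.mul_assoc, trace_mul_comm, ← Matrix.mul_assoc]
  have := hA.conjTranspose_mul_mul_same C
  rw [conjTranspose_eq_transpose_of_trivial] at this
  exact this.trace_nonneg

variable {ι : Type*} [Fintype ι] [DecidableEq ι]

lemma posSemidef_pow_two_mul_of_isSymm {W : Matrix m m ℝ} (hW : W.IsSymm) (p : ℕ) :
    (W ^ (2 * p)).PosSemidef := by
  rw [two_mul, pow_add]
  have h : (W ^ p)ᴴ = W ^ p := by
    rw [conjTranspose_eq_transpose_of_trivial, transpose_pow, hW.eq]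
  nth_rewrite 1 [← h]
  exact posSemidef_conjTranspose_mul_self _

/-- One step of the noncommutative Khintchine recursion. -/
lemma sum_trace_signSum_pow_succ_le {A : ι → Matrix m m ℝ} (hA : ∀ i, (A i).IsSymm) {σ : ℝ}
    (hσ : (σ • (1 : Matrix m m ℝ) - ∑ i, A i * A i).PosSemidef) (p : ℕ) :
    ∑ ε : ι → ℤˣ, (signSum A ε ^ (2 * (p + 1))).trace ≤
      (2 * p + 1) * σ * ∑ ε : ι → ℤˣ, (signSum A ε ^ (2 * p)).trace := by
  have hstep : ∀ i, ∑ ε : ι → ℤˣ, ((ε i : ℤ) : ℝ) * (A i * signSum A ε ^ (2 * p + 1)).trace ≤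
      (2 * p + 1) * ∑ ε : ι → ℤˣ, (A i * A i * signSum A ε ^ (2 * p)).trace := by
    intro i
    have hpt : ∀ ε : ι → ℤˣ, ((ε i : ℤ) : ℝ) * ((A i * signSum A ε ^ (2 * p + 1)).trace -
        (A i * signSum A (flipSign i ε) ^ (2 * p + 1)).trace) ≤
        (2 * p + 1) * ((A i * A i * signSum A ε ^ (2 * p)).trace +
          (A i * A i * signSum A (flipSign i ε) ^ (2 * p)).trace) := by
      intro ε
      refine le_trans (le_of_eq ?_) (two_mul_sum_trace_le (hA i) (signSum_isSymm hA ε)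
        (signSum_isSymm hA (flipSign i ε)) p)
      rw [← trace_sub, ← Matrix.mul_sub, pow_sub_pow_eq_sum, Finset.mul_sum, trace_sum,
        Finset.mul_sum, Finset.mul_sum]
      refine Finset.sum_congr rfl fun q _ => ?_
      rw [signSum_sub_signSum_flipSign]
      simp only [Matrix.mul_smul, Matrix.smul_mul, trace_smul, smul_eq_mul, ← Matrix.mul_assoc]
      linear_combination (2 * (A i * signSum A ε ^ q * A i *
        signSum A (flipSign i ε) ^ (2 * p - q)).trace) * intUnit_cast_mul_self (ε i)
    have h := two_mul_sum_sign_mul i (fun ε => (A i * signSum A ε ^ (2 * p + 1)).trace)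
    have h' := Finset.sum_le_sum fun ε (_ : ε ∈ Finset.univ) => hpt ε
    rw [← h, ← Finset.mul_sum, Finset.sum_add_distrib,
      Equiv.sum_comp (flipSign i) fun ε => (A i * A i * signSum A ε ^ (2 * p)).trace] at h'
    linarith
  calc ∑ ε : ι → ℤˣ, (signSum A ε ^ (2 * (p + 1))).trace
      = ∑ i, ∑ ε : ι → ℤˣ, ((ε i : ℤ) : ℝ) * (A i * signSum A ε ^ (2 * p + 1)).trace := by
        rw [Finset.sum_comm]
        refine Finset.sum_congr rfl fun ε _ => ?_
        rw [show 2 * (p + 1) = (2 * p + 1) + 1 by ring, pow_succ']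
        nth_rewrite 1 [signSum]
        rw [Finset.sum_mul, trace_sum]
        simp only [Matrix.smul_mul, trace_smul, smul_eq_mul]
    _ ≤ ∑ i, (2 * p + 1) * ∑ ε : ι → ℤˣ, (A i * A i * signSum A ε ^ (2 * p)).trace :=
        Finset.sum_le_sum fun i _ => hstep i
    _ = (2 * p + 1) * ∑ ε : ι → ℤˣ, ((∑ i, A i * A i) * signSum A ε ^ (2 * p)).trace := by
        rw [← Finset.mul_sum, Finset.sum_comm]
        simp only [Finset.sum_mul, trace_sum]
    _ ≤ (2 * p + 1) * ∑ ε : ι → ℤˣ, σ * (signSum A ε ^ (2 * p)).trace := by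
        gcongr with ε _
        have := trace_mul_nonneg_of_posSemidef hσ
          (posSemidef_pow_two_mul_of_isSymm (signSum_isSymm hA ε) p)
        rw [Matrix.sub_mul, trace_sub, Matrix.smul_mul, Matrix.one_mul, trace_smul,
          smul_eq_mul] at this
        linarith
    _ = _ := by rw [← Finset.mul_sum, mul_assoc]

/-- Noncommutative Khintchine inequality for even moments. -/
lemma sum_trace_signSum_pow_div_factorial_le {A : ι → Matrix m m ℝ} (hA : ∀ i, (A i).IsSymm)
    {σ : ℝ} (hσ0 : 0 ≤ σ) (hσ : (σ • (1 : Matrix m m ℝ) - ∑ i, A i * A i).PosSemidef) (p : ℕ) :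
    (∑ ε : ι → ℤˣ, (signSum A ε ^ (2 * p)).trace) / (2 * p).factorial ≤
      Fintype.card (ι → ℤˣ) * Fintype.card m * ((σ / 2) ^ p / p.factorial) := by
  induction p with
  | zero => simp
  | succ p ih =>
    have h := sum_trace_signSum_pow_succ_le hA hσ p
    have hf : ((2 * (p + 1)).factorial : ℝ) =
        (2 * (p + 1)) * ((2 * p + 1) * ((2 * p).factorial : ℝ)) := by
      rw [show 2 * (p + 1) = (2 * p + 1) + 1 by ring, Nat.factorial_succ, Nat.factorial_succ]
      push_cast
      ring
    have hfp : (0 : ℝ) < (2 * p).factorial := by positivity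
    calc (∑ ε : ι → ℤˣ, (signSum A ε ^ (2 * (p + 1))).trace) / (2 * (p + 1)).factorial
        ≤ ((2 * p + 1) * σ * ∑ ε : ι → ℤˣ, (signSum A ε ^ (2 * p)).trace) /
            (2 * (p + 1)).factorial := by gcongr
      _ = σ / (2 * (p + 1)) *
            ((∑ ε : ι → ℤˣ, (signSum A ε ^ (2 * p)).trace) / (2 * p).factorial) := by
          rw [hf]; field_simp
      _ ≤ σ / (2 * (p + 1)) *
            (Fintype.card (ι → ℤˣ) * Fintype.card m * ((σ / 2) ^ p / p.factorial)) := by gcongr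
      _ = _ := by
          rw [Nat.factorial_succ, pow_succ]
          push_cast
          field_simp

end MatrixMoments

section MatrixTail

variable {m : Type*} [Fintype m] [DecidableEq m] {ι : Type*} [Fintype ι] [DecidableEq ι]

/-- If `W = U diag(d) Uᵀ` with `U` orthogonal and `d_i² ≤ c` for all `i`, then `W² ⪯ c I`. -/
lemma posSemidef_smul_one_sub_sq {U : Matrix m m ℝ} {d : m → ℝ} (hU : Uᵀ * U = 1)
    (hU' : U * Uᵀ = 1) {c : ℝ} (hc : ∀ i, d i ^ 2 ≤ c) :
    (c • (1 : Matrix m m ℝ) - (U * diagonal d * Uᵀ) ^ 2).PosSemidef := by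
  have h : c • (1 : Matrix m m ℝ) - (U * diagonal d * Uᵀ) ^ 2 =
      U * diagonal (fun i => c - d i ^ 2) * Uᴴ := by
    have hdiag : diagonal (fun i => c - d i ^ 2) =
        c • (1 : Matrix m m ℝ) - diagonal (fun i => d i ^ 2) := by
      rw [smul_one_eq_diagonal, diagonal_sub]
    rw [conj_diagonal_pow hU hU', hdiag, conjTranspose_eq_transpose_of_trivial, Matrix.mul_sub,
      Matrix.sub_mul, Matrix.mul_smul, Matrix.mul_one, Matrix.smul_mul, hU']
  rw [h]
  exact (PosSemidef.diagonal fun i => sub_nonneg.2 (hc i)).mul_mul_conjTranspose_same U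

open Classical in
/-- Matrix Rademacher tail bound: if `∑ A_i² ⪯ σ I`, then `(∑ ε_i A_i)² ⪯ κ σ I` fails for at most
a fraction `2 m exp(-κ/2)` of the sign patterns. -/
lemma card_not_posSemidef_le {A : ι → Matrix m m ℝ} (hA : ∀ i, (A i).IsSymm) {σ κ : ℝ}
    (hσ0 : 0 ≤ σ) (hκ : 0 ≤ κ)
    (hσ : (σ • (1 : Matrix m m ℝ) - ∑ i, A i * A i).PosSemidef) :
    (Finset.card {ε : ι → ℤˣ |
        ¬ ((κ * σ) • (1 : Matrix m m ℝ) - signSum A ε ^ 2).PosSemidef} : ℝ) ≤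
      2 * Fintype.card m * Real.exp (-(κ / 2)) * Fintype.card (ι → ℤˣ) := by
  choose U d hU hU' hW using fun ε =>
    exists_orthogonal_diagonalization (signSum A ε) (signSum_isSymm hA ε)
  have hmom : ∀ p : ℕ, ∑ ε : ι → ℤˣ, ∑ j, d ε j ^ (2 * p) / ((2 * p).factorial : ℝ) ≤
      Fintype.card (ι → ℤˣ) * Fintype.card m * ((σ / 2) ^ p / p.factorial) := by
    intro p
    refine le_trans (le_of_eq ?_) (sum_trace_signSum_pow_div_factorial_le hA hσ0 hσ p)
    rw [Finset.sum_div]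
    refine Finset.sum_congr rfl fun ε _ => ?_
    rw [← Finset.sum_div, hW ε, trace_pow_eq_sum (hU ε) (hU' ε)]
  have hbad : ∀ ε : ι → ℤˣ, ¬ ((κ * σ) • (1 : Matrix m m ℝ) - signSum A ε ^ 2).PosSemidef →
      ∃ j, κ * σ < d ε j ^ 2 := by
    intro ε hε
    by_contra! hcon
    rw [hW ε] at hε
    exact hε (posSemidef_smul_one_sub_sq (hU ε) (hU' ε) hcon)
  rcases hσ0.eq_or_lt with rfl | hσpos
  · have hz : ∀ ε j, d ε j ^ 2 = 0 := by
      have h1 := hmom 1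
      norm_num at h1
      have h2 := (Finset.sum_eq_zero_iff_of_nonneg fun ε _ =>
        Finset.sum_nonneg fun j _ => div_nonneg (sq_nonneg (d ε j)) zero_le_two).1
        (le_antisymm h1 (Finset.sum_nonneg fun ε _ =>
          Finset.sum_nonneg fun j _ => div_nonneg (sq_nonneg (d ε j)) zero_le_two))
      intro ε j
      have h3 := (Finset.sum_eq_zero_iff_of_nonneg fun j _ =>
        div_nonneg (sq_nonneg (d ε j)) zero_le_two).1 (h2 ε (Finset.mem_univ _)) j
        (Finset.mem_univ _)
      linarith
    have : Finset.card {ε : ι → ℤˣ |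
        ¬ ((κ * 0) • (1 : Matrix m m ℝ) - signSum A ε ^ 2).PosSemidef} = 0 := by
      rw [Finset.card_eq_zero, Finset.filter_eq_empty_iff]
      intro ε _ hε
      obtain ⟨j, hj⟩ := hbad ε hε
      rw [hz, mul_zero] at hj
      exact lt_irrefl _ hj
    rw [this, Nat.cast_zero]
    positivity
  · set θ := √(κ / σ) with hθ
    have hθ2 : θ ^ 2 = κ / σ := Real.sq_sqrt (by positivity)
    have hcosh : ∑ ε : ι → ℤˣ, ∑ j, Real.cosh (θ * d ε j) ≤
        Fintype.card (ι → ℤˣ) * Fintype.card m * Real.exp (κ / 2) := by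
      have hs1 : HasSum (fun p : ℕ => ∑ ε : ι → ℤˣ, ∑ j,
          (θ * d ε j) ^ (2 * p) / ((2 * p).factorial : ℝ))
          (∑ ε : ι → ℤˣ, ∑ j, Real.cosh (θ * d ε j)) :=
        hasSum_sum fun ε _ => hasSum_sum fun j _ => Real.hasSum_cosh _
      have hs2 : HasSum (fun p : ℕ => (Fintype.card (ι → ℤˣ) * Fintype.card m : ℝ) *
          ((κ / 2) ^ p / p.factorial))
          (Fintype.card (ι → ℤˣ) * Fintype.card m * Real.exp (κ / 2)) := by
        refine HasSum.mul_left _ ?_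
        rw [Real.exp_eq_exp_ℝ]
        exact NormedSpace.expSeries_div_hasSum_exp (κ / 2)
      refine hasSum_le (fun p => ?_) hs1 hs2
      have h := mul_le_mul_of_nonneg_left (hmom p) (pow_nonneg (Real.sqrt_nonneg (κ / σ)) (2 * p))
      rw [← hθ, Finset.mul_sum] at h
      have hpow : θ ^ (2 * p) * (σ / 2) ^ p = (κ / 2) ^ p := by
        rw [pow_mul, hθ2, ← mul_pow]
        congr 1
        field_simp
      calc ∑ ε : ι → ℤˣ, ∑ j, (θ * d ε j) ^ (2 * p) / ((2 * p).factorial : ℝ)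
          = ∑ ε : ι → ℤˣ, θ ^ (2 * p) * ∑ j, d ε j ^ (2 * p) / ((2 * p).factorial : ℝ) := by
            refine Finset.sum_congr rfl fun ε _ => ?_
            rw [Finset.mul_sum]
            refine Finset.sum_congr rfl fun j _ => ?_
            rw [mul_pow, mul_div_assoc]
        _ ≤ _ := h
        _ = _ := by rw [← hpow]; ring
    have hlow : ∀ ε ∈ ({ε : ι → ℤˣ |
        ¬ ((κ * σ) • (1 : Matrix m m ℝ) - signSum A ε ^ 2).PosSemidef} : Finset (ι → ℤˣ)),
        Real.exp κ / 2 ≤ ∑ j, Real.cosh (θ * d ε j) := by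
      intro ε hε
      obtain ⟨j, hj⟩ := hbad ε (Finset.mem_filter.1 hε).2
      refine le_trans ?_ (Finset.single_le_sum (f := fun j => Real.cosh (θ * d ε j))
        (fun j _ => (Real.cosh_pos _).le) (Finset.mem_univ j))
      have hκle : κ ≤ |θ * d ε j| := by
        refine abs_le_of_sq_le_sq' ?_ (abs_nonneg _) |>.2
        rw [sq_abs, mul_pow, hθ2]
        calc κ ^ 2 = κ / σ * (κ * σ) := by field_simp
          _ ≤ κ / σ * d ε j ^ 2 := by gcongr
      rw [← Real.cosh_abs, Real.cosh_eq]
      have := Real.exp_le_exp.2 hκle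
      have := Real.exp_pos (-|θ * d ε j|)
      linarith
    have hcount := (Finset.card_nsmul_le_sum _ _ _ hlow).trans
      ((Finset.sum_le_sum_of_subset_of_nonneg (Finset.filter_subset _ _) fun ε _ _ =>
        Finset.sum_nonneg fun j _ => (Real.cosh_pos _).le).trans hcosh)
    rw [nsmul_eq_mul] at hcount
    have he : Real.exp κ = Real.exp (κ / 2) * Real.exp (κ / 2) := by
      rw [← Real.exp_add, add_halves]
    have hpos := Real.exp_pos (κ / 2)
    rw [Real.exp_neg]
    rw [he] at hcount
    refine le_of_mul_le_mul_right ?_ hpos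
    refine le_of_mul_le_mul_right ?_ hpos
    field_simp
    field_simp at hcount
    linarith

end MatrixTail

/-- The matrix `𝒮[Q] = ∑ i j, Q_{ij} S^i S^j`. -/
def calS {nb fk : ℕ} (Sm : Fin nb → Matrix (Fin fk) (Fin fk) ℝ) (Q : Matrix (Fin nb) (Fin nb) ℝ) :
    Matrix (Fin fk) (Fin fk) ℝ :=
  ∑ i, ∑ j, Q i j • (Sm i * Sm j)

lemma sum_mul_self_eq_calS {nb fk : ℕ} {ι : Type*} [Fintype ι]
    (Sm : Fin nb → Matrix (Fin fk) (Fin fk) ℝ) (G : Matrix (Fin nb) ι ℝ) :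
    ∑ l, (∑ i, G i l • Sm i) * (∑ i, G i l • Sm i) = calS Sm (G * Gᵀ) := by
  simp only [calS, Matrix.mul_apply, transpose_apply, Finset.sum_smul, Finset.sum_mul_sum,
    Matrix.smul_mul, Matrix.mul_smul, smul_smul]
  rw [Finset.sum_comm]
  refine Finset.sum_congr rfl fun i _ => ?_
  rw [Finset.sum_comm]
  exact Finset.sum_congr rfl fun j _ => Finset.sum_congr rfl fun l _ => by rw [mul_comm]

lemma sumElim_dotProduct_fromBlocks_mulVec {m : ℕ} (Q : Matrix (Fin m) (Fin m) ℝ) (q : Fin m → ℝ)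
    (τ : ℝ) (z : Fin m → ℝ) (w : ℝ) :
    Sum.elim z (fun _ => w) ⬝ᵥ (fromBlocks Q (of fun i (_ : Unit) => q i)
      (of fun (_ : Unit) j => q j) (of fun _ _ => τ)) *ᵥ Sum.elim z (fun _ => w) =
      z ⬝ᵥ Q *ᵥ z + 2 * w * (q ⬝ᵥ z) + τ * w ^ 2 := by
  rw [fromBlocks_mulVec]
  simp only [dotProduct, Fintype.sum_sum_type, Sum.elim_inl, Sum.elim_inr, Matrix.mulVec,
    Function.comp_def, Pi.add_apply, of_apply, Finset.univ_unique, Finset.sum_singleton,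
    mul_add, Finset.sum_add_distrib]
  have : ∀ i, z i * (q i * w) = w * (q i * z i) := fun i => by ring
  simp only [this, ← Finset.mul_sum]
  ring

lemma sumElim_dotProduct_qPlus_mulVec {m : ℕ} (Q : Matrix (Fin m) (Fin m) ℝ) (q : Fin m → ℝ)
    (z : Fin m → ℝ) (w : ℝ) :
    Sum.elim z (fun _ => w) ⬝ᵥ qPlus Q q *ᵥ Sum.elim z (fun _ => w) =
      z ⬝ᵥ Q *ᵥ z + 2 * w * (q ⬝ᵥ z) := by
  have h := sumElim_dotProduct_fromBlocks_mulVec Q q 0 z w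
  rw [zero_mul, add_zero] at h
  exact h

lemma qPlus_isSymm {m : ℕ} {Q : Matrix (Fin m) (Fin m) ℝ} (hQ : Q.IsSymm) (q : Fin m → ℝ) :
    (qPlus Q q).IsSymm := by
  rw [Matrix.IsSymm, qPlus, fromBlocks_transpose, hQ.eq, transpose_zero]
  rfl

/-- A positive semidefinite `Y` can be factored as `G Gᵀ` with `Gᵀ M G` diagonal. -/
lemma exists_factor_diagonalizing {m : Type*} [Fintype m] [DecidableEq m] {M Y : Matrix m m ℝ}
    (hM : M.IsSymm) (hY : Y.PosSemidef) :
    ∃ (G : Matrix m m ℝ) (D : m → ℝ), Y = G * Gᵀ ∧ Gᵀ * M * G = diagonal D := by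
  obtain ⟨C, rfl⟩ := exists_eq_mul_transpose_of_posSemidef hY
  obtain ⟨U, D, hU, hU', h⟩ := exists_orthogonal_diagonalization (Cᵀ * M * C) (by
    rw [Matrix.IsSymm, transpose_mul, transpose_mul, hM.eq, transpose_transpose, Matrix.mul_assoc])
  refine ⟨C * U, D, ?_, ?_⟩
  · rw [transpose_mul, Matrix.mul_assoc, ← Matrix.mul_assoc U, hU', Matrix.one_mul]
  · rw [transpose_mul]
    calc Uᵀ * Cᵀ * M * (C * U) = Uᵀ * (Cᵀ * M * C) * U := by simp only [Matrix.mul_assoc]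
      _ = (Uᵀ * U) * diagonal D * (Uᵀ * U) := by rw [h]; simp only [Matrix.mul_assoc]
      _ = diagonal D := by rw [hU, Matrix.one_mul, Matrix.mul_one]

lemma mulVec_dotProduct_mulVec_mulVec {m l : Type*} [Fintype m] [Fintype l] (G : Matrix m l ℝ)
    (M : Matrix m m ℝ) (e : l → ℝ) :
    (G *ᵥ e) ⬝ᵥ M *ᵥ (G *ᵥ e) = e ⬝ᵥ (Gᵀ * M * G) *ᵥ e := by
  rw [← mulVec_mulVec, ← mulVec_mulVec, dotProduct_mulVec e Gᵀ, vecMul_transpose]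

/-- If `Gᵀ M G` is diagonal, the quadratic form of `M` at `G ε` does not depend on the signs. -/
lemma dotProduct_mulVec_signs {m : Type*} [Fintype m] [DecidableEq m] {M G : Matrix m m ℝ}
    {D : m → ℝ} (h : Gᵀ * M * G = diagonal D) (ε : m → ℤˣ) :
    (G *ᵥ fun l => ((ε l : ℤ) : ℝ)) ⬝ᵥ M *ᵥ (G *ᵥ fun l => ((ε l : ℤ) : ℝ)) =
      (M * (G * Gᵀ)).trace := by
  set e : m → ℝ := fun l => ((ε l : ℤ) : ℝ) with he
  calc (G *ᵥ e) ⬝ᵥ M *ᵥ (G *ᵥ e) = e ⬝ᵥ (Gᵀ * M * G) *ᵥ e := by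
        rw [mulVec_dotProduct_mulVec_mulVec]
    _ = ∑ l, D l := by
        rw [h, dotProduct]
        refine Finset.sum_congr rfl fun l _ => ?_
        rw [mulVec_diagonal]
        linear_combination D l * intUnit_cast_mul_self (ε l)
    _ = (M * (G * Gᵀ)).trace := by
        rw [← trace_diagonal, ← h, ← Matrix.mul_assoc, trace_mul_comm (M * G), Matrix.mul_assoc]

open Classical in
/-- A sign pattern satisfying simultaneously a scalar bound and `K` matrix bounds. -/
lemma exists_sign_pattern {K : ℕ} (hK : 1 ≤ K) {f : Fin K → ℕ} (hf : ∀ k, 1 ≤ f k)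
    {ι : Type*} [Fintype ι] [DecidableEq ι] (b : ι → ℝ) (hb : ∑ l, b l ^ 2 ≤ 1)
    (A : (k : Fin K) → ι → Matrix (Fin (f k)) (Fin (f k)) ℝ) (hA : ∀ k l, (A k l).IsSymm)
    (σ : Fin K → ℝ) (hσ0 : ∀ k, 0 ≤ σ k)
    (hσ : ∀ k, (σ k • (1 : Matrix (Fin (f k)) (Fin (f k)) ℝ) - ∑ l, A k l * A k l).PosSemidef) :
    ∃ ε : ι → ℤˣ, |signSum b ε| ≤ 1 ∧ ∀ k,
      ((2 * Real.log (8 * ∑ k, (f k : ℝ)) * σ k) • (1 : Matrix (Fin (f k)) (Fin (f k)) ℝ) -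
        signSum (A k) ε ^ 2).PosSemidef := by
  set F : ℝ := ∑ k, (f k : ℝ) with hF
  have hF1 : 1 ≤ F := by
    have h := Finset.single_le_sum (f := fun k => (f k : ℝ)) (fun k _ => Nat.cast_nonneg _)
      (Finset.mem_univ (⟨0, hK⟩ : Fin K))
    exact le_trans (by exact_mod_cast hf _) h
  set κ := 2 * Real.log (8 * F) with hκ
  have hκ0 : 0 ≤ κ := mul_nonneg zero_le_two (Real.log_nonneg (by linarith))
  have hexp : Real.exp (-(κ / 2)) = (8 * F)⁻¹ := by
    rw [hκ, mul_div_cancel_left₀ _ two_ne_zero, Real.exp_neg, Real.exp_log (by linarith)]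
  by_contra! hcon
  set N : ℝ := (Fintype.card (ι → ℤˣ) : ℝ) with hN
  have hNpos : 0 < N := by rw [hN]; exact_mod_cast Fintype.card_pos
  have hgood : N ≤ 3 * Finset.card {ε : ι → ℤˣ | |signSum b ε| ≤ 1} := by
    convert card_le_three_mul_card_abs_signSum_le_one b hb
  set Bad : Fin K → Finset (ι → ℤˣ) := fun k => {ε : ι → ℤˣ |
    ¬ ((κ * σ k) • (1 : Matrix (Fin (f k)) (Fin (f k)) ℝ) - signSum (A k) ε ^ 2).PosSemidef}
  have hbad : ∀ k, ((Bad k).card : ℝ) ≤ f k * (N / (4 * F)) := by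
    intro k
    refine (card_not_posSemidef_le (hA k) (hσ0 k) hκ0 (hσ k)).trans_eq ?_
    rw [hexp, Fintype.card_fin, ← hN]
    field_simp
    ring
  have hsub : ({ε : ι → ℤˣ | |signSum b ε| ≤ 1} : Finset (ι → ℤˣ)) ⊆
      Finset.univ.biUnion Bad := by
    intro ε hε
    obtain ⟨k, hk⟩ := hcon ε (Finset.mem_filter.1 hε).2
    exact Finset.mem_biUnion.2 ⟨k, Finset.mem_univ _, Finset.mem_filter.2 ⟨Finset.mem_univ _, hk⟩⟩
  have hcard := (Finset.card_le_card hsub).trans Finset.card_biUnion_le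
  have hcard' : ((Finset.card {ε : ι → ℤˣ | |signSum b ε| ≤ 1} : ℕ) : ℝ) ≤
      ∑ k, ((Bad k).card : ℝ) := by exact_mod_cast hcard
  have hsum : ∑ k, ((Bad k).card : ℝ) ≤ N / 4 := by
    refine (Finset.sum_le_sum fun k _ => hbad k).trans_eq ?_
    rw [← Finset.sum_mul, ← hF]
    field_simp
  linarith

/-- Randomized rounding: the semidefinite relaxation value is dominated by the robust bound. -/
lemma trace_qPlus_mul_le {n nb K : ℕ} (hK : 1 ≤ K)
    {P : Matrix (Fin n) (Fin nb) ℝ} {f : Fin K → ℕ} (hf : ∀ k, 1 ≤ f k)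
    {Smat : (k : Fin K) → Fin nb → Matrix (Fin (f k)) (Fin (f k)) ℝ}
    (hSm : ∀ k i, (Smat k i).IsSymm) {T : Set (Fin K → ℝ)} (hTnonneg : ∀ t ∈ T, ∀ k, 0 ≤ t k)
    {ρ : ℝ} (hρ : 0 < ρ) {X : Matrix (Fin n) (Fin n) ℝ} (hX : X.IsSymm) {x : Fin n → ℝ} {ξ : ℝ}
    (hrob : ∀ ζ ∈ spectratope f P Smat T (2 * Real.log (8 * (∑ k, (f k : ℝ))) * ρ),
      ζ ⬝ᵥ X *ᵥ ζ + 2 * (x ⬝ᵥ ζ) ≤ ξ)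
    {Y : Matrix (Fin nb ⊕ Unit) (Fin nb ⊕ Unit) ℝ} (hY : Y.PosSemidef)
    (hY1 : Y (Sum.inr ()) (Sum.inr ()) ≤ 1) {t : Fin K → ℝ} (ht : t ∈ T)
    (hYt : ∀ k, ((ρ * t k) • (1 : Matrix (Fin (f k)) (Fin (f k)) ℝ) -
      calS (Smat k) Y.toBlocks₁₁).PosSemidef) :
    (qPlus (Pᵀ * X * P) (Pᵀ *ᵥ x) * Y).trace ≤ ξ := by
  have hM : (Pᵀ * X * P).IsSymm := by
    rw [Matrix.IsSymm, transpose_mul, transpose_mul, hX.eq, transpose_transpose, Matrix.mul_assoc]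
  obtain ⟨G, D, rfl, hD⟩ := exists_factor_diagonalizing (qPlus_isSymm hM (Pᵀ *ᵥ x)) hY
  set A : (k : Fin K) → (Fin nb ⊕ Unit) → Matrix (Fin (f k)) (Fin (f k)) ℝ :=
    fun k l => ∑ i, G (Sum.inl i) l • Smat k i with hA
  have hAsymm : ∀ k l, (A k l).IsSymm := by
    intro k l
    simp only [hA, Matrix.IsSymm, transpose_sum, transpose_smul, (hSm k _).eq]
  have hAsum : ∀ k, ∑ l, A k l * A k l = calS (Smat k) (G * Gᵀ).toBlocks₁₁ := fun k =>
    sum_mul_self_eq_calS (Smat k) (G.submatrix Sum.inl id)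
  have hb : ∑ l, G (Sum.inr ()) l ^ 2 ≤ 1 := by
    refine le_trans (le_of_eq ?_) hY1
    simp only [Matrix.mul_apply, transpose_apply, sq]
  obtain ⟨ε, hε1, hε2⟩ := exists_sign_pattern hK hf (fun l => G (Sum.inr ()) l) hb A hAsymm
    (fun k => ρ * t k) (fun k => mul_nonneg hρ.le (hTnonneg t ht k))
    (fun k => by rw [hAsum]; exact hYt k)
  set z : Fin nb → ℝ := fun i => signSum (fun l => G (Sum.inl i) l) ε with hz
  set w : ℝ := signSum (fun l => G (Sum.inr ()) l) ε with hw
  have hv : (G *ᵥ fun l => ((ε l : ℤ) : ℝ)) = Sum.elim z (fun _ => w) := by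
    ext (i | i) <;> simp [mulVec, dotProduct, hz, hw, signSum, mul_comm]
  have hAz : ∀ k, signSum (A k) ε = ∑ i, z i • Smat k i := by
    intro k
    simp only [hz, hA, signSum, Finset.sum_smul, Finset.smul_sum, smul_smul, smul_eq_mul]
    rw [Finset.sum_comm]
  have hval := dotProduct_mulVec_signs hD ε
  rw [hv, sumElim_dotProduct_qPlus_mulVec] at hval
  rw [← hval]
  have hlin : (Pᵀ *ᵥ x) ⬝ᵥ z = x ⬝ᵥ (P *ᵥ z) := by
    rw [mulVec_transpose, dotProduct_mulVec]
  rw [← mulVec_dotProduct_mulVec_mulVec, hlin]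
  have hmem : ∀ y : Fin nb → ℝ, (∀ k, (∑ i, y i • Smat k i) ^ 2 = signSum (A k) ε ^ 2) →
      (P *ᵥ y) ⬝ᵥ X *ᵥ (P *ᵥ y) + 2 * (x ⬝ᵥ (P *ᵥ y)) ≤ ξ := by
    intro y hy
    refine hrob _ ⟨y, t, ht, rfl, fun k => ?_⟩
    rw [hy k, mul_assoc]
    exact hε2 k
  have h1 := hmem z fun k => by rw [hAz]
  have h2 := hmem (-z) fun k => by simp [hAz]
  simp only [mulVec_neg, dotProduct_neg, neg_dotProduct, neg_neg] at h2
  rw [abs_le] at hε1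
  rcases le_total 0 (x ⬝ᵥ (P *ᵥ z)) with h0 | h0
  · nlinarith [mul_le_mul_of_nonneg_right hε1.2 h0]
  · nlinarith [mul_le_mul_of_nonpos_right hε1.1 h0]

section StrictlyPositive

variable {m : Type*} [Fintype m]

/-- Matrices (not necessarily symmetric) with uniformly positive quadratic form. -/
def strictlyPositiveForms (m : Type*) [Fintype m] : Set (Matrix m m ℝ) :=
  {N | ∃ δ > 0, ∀ v : m → ℝ, δ * (v ⬝ᵥ v) ≤ v ⬝ᵥ N *ᵥ v}

lemma strictlyPositiveForms_smul_add {N N' : Matrix m m ℝ} {s : ℝ}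
    (hs : 0 ≤ s) (hN : ∀ v : m → ℝ, 0 ≤ v ⬝ᵥ N *ᵥ v) (hN' : N' ∈ strictlyPositiveForms m) :
    s • N + N' ∈ strictlyPositiveForms m := by
  obtain ⟨δ, hδ, h⟩ := hN'
  refine ⟨δ, hδ, fun v => ?_⟩
  rw [add_mulVec, dotProduct_add, smul_mulVec, dotProduct_smul, smul_eq_mul]
  linarith [h v, mul_nonneg hs (hN v)]

lemma dotProduct_mulVec_nonneg_of_mem_strictlyPositiveForms {N : Matrix m m ℝ}
    (hN : N ∈ strictlyPositiveForms m) (v : m → ℝ) : 0 ≤ v ⬝ᵥ N *ᵥ v := by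
  obtain ⟨δ, hδ, h⟩ := hN
  exact (mul_nonneg hδ.le (by simpa using dotProduct_star_self_nonneg v)).trans (h v)

lemma smul_one_mem_strictlyPositiveForms [DecidableEq m] {c : ℝ} (hc : 0 < c) :
    c • (1 : Matrix m m ℝ) ∈ strictlyPositiveForms m :=
  ⟨c, hc, fun v => by rw [smul_mulVec, one_mulVec, dotProduct_smul, smul_eq_mul]⟩

lemma convex_strictlyPositiveForms : Convex ℝ (strictlyPositiveForms m) := by
  rintro N ⟨δ, hδ, h⟩ N' ⟨δ', hδ', h'⟩ a b ha hb hab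
  refine ⟨a * δ + b * δ', ?_, fun v => ?_⟩
  · rcases ha.eq_or_lt with rfl | ha'
    · have : b = 1 := by linarith
      simp [this, hδ']
    · positivity
  · rw [add_mulVec, dotProduct_add, smul_mulVec, smul_mulVec, dotProduct_smul, dotProduct_smul,
      smul_eq_mul, smul_eq_mul]
    linarith [mul_le_mul_of_nonneg_left (h v) ha, mul_le_mul_of_nonneg_left (h' v) hb]

lemma isOpen_strictlyPositiveForms : IsOpen (strictlyPositiveForms m) := by
  rw [isOpen_iff_mem_nhds]
  rintro N ⟨δ, hδ, h⟩
  set c : ℝ := δ / (2 * (Fintype.card m + 1)) with hc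
  have hcpos : 0 < c := by positivity
  have hnhds : ∀ᶠ N' in nhds N, ∀ i j, |N' i j - N i j| < c := by
    rw [Filter.eventually_all]
    intro i
    rw [Filter.eventually_all]
    intro j
    have hcont : Continuous fun N' : Matrix m m ℝ => |N' i j - N i j| :=
      ((continuous_id.matrix_elem i j).sub continuous_const).abs
    exact hcont.continuousAt.eventually_lt continuousAt_const (by simpa using hcpos)
  filter_upwards [hnhds] with N' hN'
  refine ⟨δ / 2, by positivity, fun v => ?_⟩
  have hvv : 0 ≤ v ⬝ᵥ v := by simpa using dotProduct_star_self_nonneg v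
  have hdiff : v ⬝ᵥ N *ᵥ v - v ⬝ᵥ N' *ᵥ v ≤ c * (Fintype.card m * (v ⬝ᵥ v)) := by
    have hentry : ∀ i j, v i * (N i j * v j) - v i * (N' i j * v j) ≤ c * (|v i| * |v j|) := by
      intro i j
      calc v i * (N i j * v j) - v i * (N' i j * v j) = -(N' i j - N i j) * (v i * v j) := by ring
        _ ≤ |-(N' i j - N i j) * (v i * v j)| := le_abs_self _
        _ = |N' i j - N i j| * (|v i| * |v j|) := by rw [abs_mul, abs_neg, abs_mul]
        _ ≤ c * (|v i| * |v j|) := by gcongr; exact (hN' i j).le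
    calc v ⬝ᵥ N *ᵥ v - v ⬝ᵥ N' *ᵥ v
        = ∑ i, ∑ j, (v i * (N i j * v j) - v i * (N' i j * v j)) := by
          simp only [dotProduct, mulVec, Finset.mul_sum, Finset.sum_sub_distrib]
      _ ≤ ∑ i, ∑ j, c * (|v i| * |v j|) :=
          Finset.sum_le_sum fun i _ => Finset.sum_le_sum fun j _ => hentry i j
      _ = c * (∑ i, |v i|) ^ 2 := by
          simp only [← Finset.mul_sum, ← Finset.sum_mul, sq]
      _ ≤ c * (Fintype.card m * (v ⬝ᵥ v)) := by
          gcongr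
          have := sq_sum_le_card_mul_sum_sq (s := Finset.univ) (f := fun i => |v i|)
          simpa only [sq_abs, Finset.card_univ, dotProduct, ← sq] using this
  have hcm : c * Fintype.card m ≤ δ / 2 := by
    rw [hc, div_mul_eq_mul_div, div_le_div_iff₀ (by positivity) two_pos]
    nlinarith
  nlinarith [h v, mul_le_mul_of_nonneg_right hcm hvv]

lemma linearMap_matrix_eq_sum [DecidableEq m] (g : Matrix m m ℝ →ₗ[ℝ] ℝ) (N : Matrix m m ℝ) :
    g N = ∑ i, ∑ j, N i j * g (Matrix.single i j 1) := by
  conv_lhs => rw [matrix_eq_sum_single N]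
  simp only [map_sum]
  refine Finset.sum_congr rfl fun i _ => Finset.sum_congr rfl fun j _ => ?_
  rw [← smul_eq_mul, ← map_smul, smul_single, smul_eq_mul, mul_one]

/-- A linear functional nonnegative on matrices with nonnegative quadratic form is the trace
pairing with a positive semidefinite matrix. -/
lemma exists_posSemidef_trace_of_nonneg [DecidableEq m] (g : Matrix m m ℝ →ₗ[ℝ] ℝ)
    (hg : ∀ N : Matrix m m ℝ, (∀ v : m → ℝ, 0 ≤ v ⬝ᵥ N *ᵥ v) → 0 ≤ g N) :
    ∃ L : Matrix m m ℝ, L.PosSemidef ∧ ∀ N, g N = (L * N).trace := by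
  have hsymm : ∀ i j, g (Matrix.single i j 1) = g (Matrix.single j i 1) := by
    have hle : ∀ i j, g (Matrix.single i j 1) ≤ g (Matrix.single j i 1) := by
      intro i j
      rw [← sub_nonneg, ← map_sub]
      refine hg _ fun v => le_of_eq ?_
      rw [← transpose_single, sub_mulVec, dotProduct_sub, mulVec_transpose, dotProduct_mulVec,
        dotProduct_comm v, sub_self]
    exact fun i j => le_antisymm (hle i j) (hle j i)
  refine ⟨Matrix.of fun i j => g (Matrix.single i j 1), ?_, fun N => ?_⟩
  · refine PosSemidef.of_dotProduct_mulVec_nonneg ?_ fun v => ?_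
    · exact IsHermitian.ext fun i j => by
        rw [of_apply, of_apply, star_trivial, hsymm]
    · have h := hg (vecMulVec v v) fun u => by
        rw [vecMulVec_mulVec, dotProduct_smul]
        simpa [mul_comm, dotProduct_comm] using mul_self_nonneg (u ⬝ᵥ v)
      rw [linearMap_matrix_eq_sum] at h
      refine h.trans_eq ?_
      simp only [dotProduct, mulVec, Finset.mul_sum, vecMulVec_apply, of_apply, star_trivial]
      exact Finset.sum_congr rfl fun i _ => Finset.sum_congr rfl fun j _ => by ring
  · rw [linearMap_matrix_eq_sum, trace, Finset.sum_comm]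
    simp only [diag_apply, Matrix.mul_apply, of_apply]
    exact Finset.sum_congr rfl fun i _ => Finset.sum_congr rfl fun j _ => by
      rw [mul_comm, hsymm]

end StrictlyPositive

/-- Lagrange multipliers for a conic problem under a Slater condition. -/
lemma exists_conic_multipliers {κ : Type*} [Fintype κ] [DecidableEq κ] {m : κ → Type*}
    [∀ k, Fintype (m k)] [∀ k, DecidableEq (m k)]
    {A : Set (ℝ × ℝ × ((k : κ) → Matrix (m k) (m k) ℝ))} (hA : Convex ℝ A)
    (hdisj : ∀ p ∈ A, 0 ≤ p.2.1 → (∀ k, p.2.2 k ∈ strictlyPositiveForms (m k)) → p.1 ≤ 0)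
    (hslater : ∃ p ∈ A, 0 < p.2.1 ∧ ∀ k, p.2.2 k ∈ strictlyPositiveForms (m k)) :
    ∃ β : ℝ, ∃ L : (k : κ) → Matrix (m k) (m k) ℝ, (∀ k, (L k).PosSemidef) ∧
      ∀ p ∈ A, p.1 + β * p.2.1 + ∑ k, (L k * p.2.2 k).trace ≤ 0 := by
  set O : Set (ℝ × ℝ × ((k : κ) → Matrix (m k) (m k) ℝ)) :=
    Set.Ioi 0 ×ˢ (Set.Ioi 0 ×ˢ Set.univ.pi fun k => strictlyPositiveForms (m k)) with hO
  have hOopen : IsOpen O := isOpen_Ioi.prod (isOpen_Ioi.prod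
    (isOpen_set_pi Set.finite_univ fun k _ => isOpen_strictlyPositiveForms))
  have hOconv : Convex ℝ O := (convex_Ioi 0).prod ((convex_Ioi 0).prod
    (convex_pi fun k _ => convex_strictlyPositiveForms))
  have hOA : Disjoint O A := by
    rw [Set.disjoint_left]
    rintro p ⟨h1, h2, h3⟩ hp
    exact absurd (hdisj p hp (le_of_lt h2) fun k => h3 k trivial) (not_le.2 h1)
  obtain ⟨g, u, hgO, hgA⟩ := geometric_hahn_banach_open hOconv hOopen hA hOA
  set e : ℝ × ℝ × ((k : κ) → Matrix (m k) (m k) ℝ) := (1, 1, fun k => (1 : ℝ) • 1) with he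
  have hcone : ∀ (a b : ℝ) (N : (k : κ) → Matrix (m k) (m k) ℝ), 0 ≤ a → 0 ≤ b →
      (∀ k (v : m k → ℝ), 0 ≤ v ⬝ᵥ N k *ᵥ v) → g (a, b, N) ≤ 0 := by
    intro a b N ha hb hN
    by_contra! hcon
    obtain ⟨s, hs⟩ := exists_nat_gt ((u - g e) / g (a, b, N))
    rw [div_lt_iff₀ hcon] at hs
    have hmem : (s : ℝ) • (a, b, N) + e ∈ O := by
      refine ⟨?_, ?_, fun k _ => ?_⟩
      · show 0 < (s : ℝ) * a + 1
        positivity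
      · show 0 < (s : ℝ) * b + 1
        positivity
      · exact strictlyPositiveForms_smul_add (Nat.cast_nonneg s) (hN k)
          (smul_one_mem_strictlyPositiveForms one_pos)
    have := hgO _ hmem
    rw [map_add, map_smul, smul_eq_mul] at this
    linarith
  have hu : 0 ≤ u := by
    by_contra! hcon
    have hge : g e < 0 := (hgO e ⟨Set.mem_Ioi.2 one_pos, Set.mem_Ioi.2 one_pos, fun k _ =>
      smul_one_mem_strictlyPositiveForms one_pos⟩).trans hcon
    have hs : 0 < u / (2 * g e) := div_pos_of_neg_of_neg hcon (by linarith)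
    have hmem : (u / (2 * g e)) • e ∈ O := by
      refine ⟨?_, ?_, fun k _ => ?_⟩
      · show 0 < u / (2 * g e) * 1
        linarith
      · show 0 < u / (2 * g e) * 1
        linarith
      · have := smul_one_mem_strictlyPositiveForms (m := m k) hs
        simpa [he] using this
    have := hgO _ hmem
    rw [map_smul, smul_eq_mul] at this
    have h2 : u / (2 * g e) * g e = u / 2 := by
      field_simp [hge.ne]
    linarith
  set α : ℝ := -g (1, 0, 0) with hα
  have hsplit : ∀ (a b : ℝ) (N : (k : κ) → Matrix (m k) (m k) ℝ),
      g (a, b, N) = a * g (1, 0, 0) + b * g (0, 1, 0) + ∑ k, g (0, 0, Pi.single k (N k)) := by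
    intro a b N
    have h : (a, b, N) = a • ((1, 0, 0) : ℝ × ℝ × ((k : κ) → Matrix (m k) (m k) ℝ)) +
        b • (0, 1, 0) + ∑ k, (0, 0, Pi.single k (N k)) := by
      refine Prod.ext ?_ (Prod.ext ?_ ?_)
      · simp [Prod.fst_sum]
      · simp [Prod.fst_sum, Prod.snd_sum]
      · simp [Prod.snd_sum, Finset.univ_sum_single]
    rw [h, map_add, map_add, map_smul, map_smul, map_sum, smul_eq_mul, smul_eq_mul]
  have hα0 : 0 < α := by
    have h0 : g (1, 0, 0) ≤ 0 := hcone 1 0 0 zero_le_one le_rfl (by simp)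
    rcases h0.lt_or_eq with h | h
    · simpa [hα] using h
    · obtain ⟨p, hp, hp1, hp2⟩ := hslater
      have h1 := hgO (1, p.2.1, p.2.2) ⟨Set.mem_Ioi.2 one_pos, hp1, fun k _ => hp2 k⟩
      have h2 := hgA p hp
      rw [show p = (p.1, p.2.1, p.2.2) from rfl, hsplit] at h2
      rw [hsplit] at h1
      rw [h] at h1 h2
      linarith
  have hL : ∀ k, ∃ L : Matrix (m k) (m k) ℝ, L.PosSemidef ∧
      ∀ N, -α⁻¹ * g (0, 0, Pi.single k N) = (L * N).trace := by
    intro k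
    refine exists_posSemidef_trace_of_nonneg (-α⁻¹ • (g.toLinearMap ∘ₗ LinearMap.inr ℝ _ _ ∘ₗ
      LinearMap.inr ℝ _ _ ∘ₗ LinearMap.single ℝ (fun k => Matrix (m k) (m k) ℝ) k)) ?_
    intro N hN
    have h := hcone 0 0 (Pi.single k N) le_rfl le_rfl (by
      intro k' v
      rcases eq_or_ne k' k with rfl | hk
      · simpa using hN v
      · simp [Pi.single_eq_of_ne hk])
    have hinv : 0 < α⁻¹ := inv_pos.2 hα0
    show 0 ≤ -α⁻¹ * g (0, 0, Pi.single k N)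
    nlinarith
  choose L hLpos hLtr using hL
  refine ⟨-α⁻¹ * g (0, 1, 0), L, hLpos, fun p hp => ?_⟩
  have h := hgA p hp
  rw [show p = (p.1, p.2.1, p.2.2) from rfl, hsplit] at h
  simp only [← hLtr, ← Finset.mul_sum]
  have h1 : p.1 = -α⁻¹ * (p.1 * g (1, 0, 0)) := by
    rw [show g (1, 0, 0) = -α by simp [hα]]
    field_simp
  rw [h1]
  have hinv : 0 < α⁻¹ := inv_pos.2 hα0
  nlinarith [mul_nonneg hinv.le (hu.trans h)]

section CalS

variable {nb fk : ℕ} (Sm : Fin nb → Matrix (Fin fk) (Fin fk) ℝ)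

lemma calS_add (Q Q' : Matrix (Fin nb) (Fin nb) ℝ) :
    calS Sm (Q + Q') = calS Sm Q + calS Sm Q' := by
  simp only [calS, Matrix.add_apply, add_smul, Finset.sum_add_distrib]

lemma calS_smul (a : ℝ) (Q : Matrix (Fin nb) (Fin nb) ℝ) : calS Sm (a • Q) = a • calS Sm Q := by
  simp only [calS, Matrix.smul_apply, smul_eq_mul, mul_smul, Finset.smul_sum]

lemma calS_transpose {Sm : Fin nb → Matrix (Fin fk) (Fin fk) ℝ} (hSm : ∀ i, (Sm i).IsSymm)
    {Q : Matrix (Fin nb) (Fin nb) ℝ} (hQ : Q.IsHermitian) : (calS Sm Q)ᵀ = calS Sm Q := by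
  simp only [calS, transpose_sum, transpose_smul, transpose_mul, (hSm _).eq]
  rw [Finset.sum_comm]
  exact Finset.sum_congr rfl fun i _ => Finset.sum_congr rfl fun j _ => by
    rw [← hQ.apply j i, star_trivial]

lemma calSstar_transpose (L : Matrix (Fin fk) (Fin fk) ℝ) :
    (calSstar Sm L)ᵀ = calSstar Sm L := by
  ext i j
  simp only [calSstar, transpose_apply, of_apply, add_comm]

lemma trace_mul_calS_vecMulVec (L : Matrix (Fin fk) (Fin fk) ℝ) (z : Fin nb → ℝ) :
    (L * calS Sm (vecMulVec z z)).trace = z ⬝ᵥ calSstar Sm L *ᵥ z := by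
  have h1 : (L * calS Sm (vecMulVec z z)).trace =
      ∑ i, ∑ j, z i * z j * (L * (Sm i * Sm j)).trace := by
    simp only [calS, vecMulVec_apply, Finset.mul_sum, trace_sum, Matrix.mul_smul, trace_smul,
      smul_eq_mul]
  have h2 : z ⬝ᵥ calSstar Sm L *ᵥ z =
      (1 / 2) * ∑ i, ∑ j, z i * z j * (L * (Sm i * Sm j)).trace +
        (1 / 2) * ∑ i, ∑ j, z i * z j * (L * (Sm j * Sm i)).trace := by
    simp only [calSstar, dotProduct, mulVec, of_apply, Finset.mul_sum, Matrix.mul_smul,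
      Matrix.mul_add, trace_smul, trace_add, smul_eq_mul, ← Finset.sum_add_distrib]
    exact Finset.sum_congr rfl fun i _ => Finset.sum_congr rfl fun j _ => by ring
  have h3 : ∑ i, ∑ j, z i * z j * (L * (Sm j * Sm i)).trace =
      ∑ i, ∑ j, z i * z j * (L * (Sm i * Sm j)).trace := by
    rw [Finset.sum_comm]
    exact Finset.sum_congr rfl fun i _ => Finset.sum_congr rfl fun j _ => by rw [mul_comm (z j)]
  rw [h1, h2, h3]
  ring

end CalS

theorem stmt7 {n nb K : ℕ} (hK : 1 ≤ K)
    (P : Matrix (Fin n) (Fin nb) ℝ)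
    (f : Fin K → ℕ) (hf : ∀ k, 1 ≤ f k)
    (Smat : (k : Fin K) → Fin nb → Matrix (Fin (f k)) (Fin (f k)) ℝ)
    (hSm : ∀ k i, (Smat k i).IsSymm)
    (hnd : ∀ z : Fin nb → ℝ, (∀ k, (∑ i, z i • Smat k i) = 0) → z = 0)
    (T : Set (Fin K → ℝ))
    (hTne : T.Nonempty) (hTconv : Convex ℝ T) (hTcomp : IsCompact T)
    (hTnonneg : ∀ t ∈ T, ∀ k, 0 ≤ t k)
    (hTmono : ∀ t t' : Fin K → ℝ, (∀ k, 0 ≤ t k) → (∀ k, t k ≤ t' k) → t' ∈ T → t ∈ T)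
    (hTpos : ∃ t ∈ T, ∀ k, 0 < t k)
    (ρ : ℝ) (hρ : 0 < ρ)
    (X : Matrix (Fin n) (Fin n) ℝ) (hX : X.IsSymm) (x : Fin n → ℝ) (ξ : ℝ)
    (hrob : ∀ ζ ∈ spectratope f P Smat T (2 * Real.log (8 * (∑ k, (f k : ℝ))) * ρ),
      ζ ⬝ᵥ X *ᵥ ζ + 2 * (x ⬝ᵥ ζ) ≤ ξ) :
    ∃ Λ : (k : Fin K) → Matrix (Fin (f k)) (Fin (f k)) ℝ, ∃ τ : ℝ,
      (∀ k, (Λ k).PosSemidef) ∧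
      (Matrix.fromBlocks ((∑ k, calSstar (Smat k) (Λ k)) - Pᵀ * X * P)
        (Matrix.of fun i (_ : Unit) => -(Pᵀ *ᵥ x) i)
        (Matrix.of fun (_ : Unit) j => -(Pᵀ *ᵥ x) j)
        (Matrix.of fun _ _ => τ)).PosSemidef ∧
      ρ * suppFn T (lamOf Λ) + τ ≤ ξ := by
  set M := qPlus (Pᵀ * X * P) (Pᵀ *ᵥ x) with hM
  set A : Set (ℝ × ℝ × ((k : Fin K) → Matrix (Fin (f k)) (Fin (f k)) ℝ)) :=
    {p | ∃ Y : Matrix (Fin nb ⊕ Unit) (Fin nb ⊕ Unit) ℝ, Y.PosSemidef ∧ ∃ t ∈ T,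
      p = ((M * Y).trace - ξ, 1 - Y (Sum.inr ()) (Sum.inr ()),
        fun k => (ρ * t k) • 1 - calS (Smat k) Y.toBlocks₁₁)} with hAdef
  have hAconv : Convex ℝ A := by
    rintro _ ⟨Y, hY, t, ht, rfl⟩ _ ⟨Y', hY', t', ht', rfl⟩ a b ha hb hab
    refine ⟨a • Y + b • Y', (hY.smul ha).add (hY'.smul hb), a • t + b • t',
      hTconv ht ht' ha hb hab, Prod.ext ?_ (Prod.ext ?_ (funext fun k => ?_))⟩
    · simp only [Prod.smul_mk, Prod.mk_add_mk, smul_eq_mul, Matrix.mul_add, Matrix.mul_smul,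
        trace_add, trace_smul]
      linear_combination (-ξ) * hab
    · simp only [Prod.smul_mk, Prod.mk_add_mk, smul_eq_mul, Matrix.add_apply, Matrix.smul_apply]
      linear_combination hab
    · simp only [Prod.smul_mk, Prod.mk_add_mk, Pi.add_apply, Pi.smul_apply, smul_eq_mul]
      rw [show (a • Y + b • Y').toBlocks₁₁ = a • Y.toBlocks₁₁ + b • Y'.toBlocks₁₁ from rfl,
        calS_add, calS_smul, calS_smul]
      module
  obtain ⟨t₀, ht₀, ht₀pos⟩ := hTpos
  obtain ⟨τ, Λ, hΛ, hle⟩ := exists_conic_multipliers hAconv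
    (by
      rintro _ ⟨Y, hY, t, ht, rfl⟩ h1 h2
      refine sub_nonpos.2 (trace_qPlus_mul_le hK hf hSm hTnonneg hρ hX hrob hY
        (sub_nonneg.1 h1) ht fun k => ?_)
      refine PosSemidef.of_dotProduct_mulVec_nonneg ?_
        (dotProduct_mulVec_nonneg_of_mem_strictlyPositiveForms (h2 k))
      rw [Matrix.IsHermitian, conjTranspose_eq_transpose_of_trivial, transpose_sub,
        transpose_smul, transpose_one, calS_transpose (hSm k)]
      exact IsHermitian.ext fun i j => hY.isHermitian.apply (Sum.inl i) (Sum.inl j))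
    ⟨_, ⟨0, PosSemidef.zero, t₀, ht₀, rfl⟩, by simp, fun k => by
      have : calS (Smat k) (0 : Matrix (Fin nb ⊕ Unit) (Fin nb ⊕ Unit) ℝ).toBlocks₁₁ = 0 := by
        simp [calS, toBlocks₁₁]
      simpa only [this, sub_zero] using
        smul_one_mem_strictlyPositiveForms (mul_pos hρ (ht₀pos k))⟩
  have hform : ∀ (z : Fin nb → ℝ) (w : ℝ), z ⬝ᵥ (Pᵀ * X * P) *ᵥ z + 2 * w * ((Pᵀ *ᵥ x) ⬝ᵥ z) ≤
      τ * w ^ 2 + z ⬝ᵥ (∑ k, calSstar (Smat k) (Λ k)) *ᵥ z := by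
    intro z w
    set c : ℝ := -ξ + τ + ∑ k, (ρ * t₀ k) * (Λ k).trace with hc
    have hs : ∀ s : ℝ, s ^ 2 * (z ⬝ᵥ (Pᵀ * X * P) *ᵥ z + 2 * w * ((Pᵀ *ᵥ x) ⬝ᵥ z) -
        τ * w ^ 2 - z ⬝ᵥ (∑ k, calSstar (Smat k) (Λ k)) *ᵥ z) + c ≤ 0 := by
      intro s
      set v : Fin nb ⊕ Unit → ℝ := Sum.elim z (fun _ => w) with hv
      have hpsd : (s ^ 2 • vecMulVec v v).PosSemidef := by
        have := posSemidef_vecMulVec_self_star v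
        rw [star_trivial] at this
        exact this.smul (sq_nonneg s)
      have h := hle _ ⟨_, hpsd, t₀, ht₀, rfl⟩
      have htr : (M * vecMulVec v v).trace =
          z ⬝ᵥ (Pᵀ * X * P) *ᵥ z + 2 * w * ((Pᵀ *ᵥ x) ⬝ᵥ z) := by
        rw [mul_vecMulVec, trace_vecMulVec, dotProduct_comm, sumElim_dotProduct_qPlus_mulVec]
      have hblock : (s ^ 2 • vecMulVec v v).toBlocks₁₁ = s ^ 2 • vecMulVec z z := rfl
      have hcorner : (s ^ 2 • vecMulVec v v) (Sum.inr ()) (Sum.inr ()) = s ^ 2 * (w * w) := rfl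
      simp only [Matrix.mul_smul, trace_smul, htr, hblock, hcorner, calS_smul, Matrix.mul_sub,
        trace_sub, Matrix.mul_one, smul_eq_mul, trace_mul_calS_vecMulVec, Finset.sum_sub_distrib,
        ← Finset.mul_sum] at h
      rw [sum_mulVec, dotProduct_sum]
      rw [hc]
      linarith
    by_contra! hcon
    set a : ℝ := z ⬝ᵥ (Pᵀ * X * P) *ᵥ z + 2 * w * ((Pᵀ *ᵥ x) ⬝ᵥ z) -
        τ * w ^ 2 - z ⬝ᵥ (∑ k, calSstar (Smat k) (Λ k)) *ᵥ z with ha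
    have hapos : 0 < a := by linarith
    have h := hs (√((|c| + 1) / a))
    rw [Real.sq_sqrt (by positivity), div_mul_cancel₀ _ hapos.ne'] at h
    linarith [neg_abs_le c]
  refine ⟨Λ, τ, hΛ, ?_, ?_⟩
  · refine PosSemidef.of_dotProduct_mulVec_nonneg ?_ fun v => ?_
    · have hXP : (Pᵀ * X * P)ᵀ = Pᵀ * X * P := by
        rw [transpose_mul, transpose_mul, hX.eq, transpose_transpose, Matrix.mul_assoc]
      have hS : (∑ k, calSstar (Smat k) (Λ k))ᵀ = ∑ k, calSstar (Smat k) (Λ k) := by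
        simp only [transpose_sum, calSstar_transpose]
      rw [Matrix.IsHermitian, conjTranspose_eq_transpose_of_trivial, fromBlocks_transpose,
        transpose_sub, hXP, hS]
      rfl
    · have h := hform (fun i => v (Sum.inl i)) (v (Sum.inr ()))
      have hv : v = Sum.elim (fun i => v (Sum.inl i)) (fun _ => v (Sum.inr ())) := by
        ext (i | i) <;> rfl
      rw [star_trivial, hv, sumElim_dotProduct_fromBlocks_mulVec, sub_mulVec, dotProduct_sub]
      have hneg : (fun i => -(Pᵀ *ᵥ x) i) = -(Pᵀ *ᵥ x) := rfl
      rw [hneg, neg_dotProduct]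
      linarith
  · have hsup : suppFn T (lamOf Λ) ≤ (ξ - τ) / ρ := by
      refine csSup_le (hTne.image _) ?_
      rintro _ ⟨t, ht, rfl⟩
      rw [le_div_iff₀ hρ]
      have h := hle _ ⟨0, PosSemidef.zero, t, ht, rfl⟩
      have hz : ∀ k, calS (Smat k)
          (0 : Matrix (Fin nb ⊕ Unit) (Fin nb ⊕ Unit) ℝ).toBlocks₁₁ = 0 := by
        simp [calS, toBlocks₁₁]
      simp only [hz, sub_zero, Matrix.mul_smul, trace_smul, smul_eq_mul, Matrix.mul_zero,
        trace_zero, Matrix.zero_apply, mul_one] at h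
      have heq : (∑ k, lamOf Λ k * t k) * ρ = ∑ k, ρ * t k * (Λ k).trace := by
        rw [Finset.sum_mul]
        exact Finset.sum_congr rfl fun k _ => by rw [lamOf]; ring
      rw [heq]
      linarith
    have := mul_le_mul_of_nonneg_left hsup hρ.le
    rw [mul_div_cancel₀ _ hρ.ne'] at this
    linarith
end
end

section
/- Let E be a finite-dimensional real inner product space, 𝐊 ⊆ E a regular cone (closed, convex, pointed, with nonempty interior), and 𝐊* its dual cone. Let W ⊆ ℝ^n be a nonempty convex set, f : W → ℝ convex on W, and g : W → E be 𝐊-convex on W. Suppose the primal problem Opt(P) = inf{ f(w) : w ∈ W, −g(w) ∈ 𝐊 } is feasible and bounded below, and the Slater condition holds: there exists w̄ ∈ W with −g(w̄) in the interior of 𝐊. Then there exists Λ* ∈ 𝐊* with inf_{w∈W} [ f(w) + ⟨Λ*, g(w)⟩ ] = Opt(P); in particular the dual problem is solvable and Opt(D) = Opt(P). -/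
open scoped RealInnerProductSpace

noncomputable section

open scoped Pointwise in
/-- A set stable under nonnegative scaling has interior stable under positive scaling. -/
theorem smul_mem_interior_of_cone {E : Type*} [NormedAddCommGroup E] [NormedSpace ℝ E]
    {K : Set E} (hcone : ∀ x ∈ K, ∀ c : ℝ, 0 ≤ c → c • x ∈ K) {x : E} (hx : x ∈ interior K)
    {c : ℝ} (hc : 0 < c) : c • x ∈ interior K := by
  have hsub : c • K ⊆ K := by
    rintro _ ⟨y, hy, rfl⟩
    exact hcone y hy c hc.le
  apply interior_mono hsub
  rw [interior_smul₀ hc.ne']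
  exact Set.smul_mem_smul_set hx

theorem add_mem_of_convex_cone {E : Type*} [AddCommGroup E] [Module ℝ E]
    {K : Set E} (hconv : Convex ℝ K) (hcone : ∀ x ∈ K, ∀ c : ℝ, 0 ≤ c → c • x ∈ K)
    {x y : E} (hx : x ∈ K) (hy : y ∈ K) : x + y ∈ K := by
  have h := hcone _ (hconv hx hy (by norm_num : (0 : ℝ) ≤ 1 / 2)
    (by norm_num : (0 : ℝ) ≤ 1 / 2) (by norm_num)) 2 (by norm_num)
  simpa [smul_add, smul_smul] using h

/-- The upper image `{(y, t) | ∃ w ∈ W, y - g w ∈ K, f w ≤ t}` of a cone-convex program is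
convex. -/
theorem convex_upperImage {V E : Type*} [AddCommGroup V] [Module ℝ V] [AddCommGroup E]
    [Module ℝ E] {K : Set E} (hconv : Convex ℝ K)
    (hcone : ∀ x ∈ K, ∀ c : ℝ, 0 ≤ c → c • x ∈ K) {W : Set V} {f : V → ℝ}
    (hf : ConvexOn ℝ W f) {g : V → E}
    (hg : ∀ u ∈ W, ∀ v ∈ W, ∀ a : ℝ, 0 ≤ a → a ≤ 1 →
      a • g u + (1 - a) • g v - g (a • u + (1 - a) • v) ∈ K) :
    Convex ℝ {z : E × ℝ | ∃ w ∈ W, z.1 - g w ∈ K ∧ f w ≤ z.2} := by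
  rintro ⟨y₁, t₁⟩ ⟨u, hu, hy₁, ht₁⟩ ⟨y₂, t₂⟩ ⟨v, hv, hy₂, ht₂⟩ a b ha hb hab
  obtain rfl : b = 1 - a := by linarith
  refine ⟨a • u + (1 - a) • v, hf.1 hu hv ha hb hab, ?_, ?_⟩
  · have h := add_mem_of_convex_cone hconv hcone (hconv hy₁ hy₂ ha hb hab)
      (hg u hu v hv a ha (by linarith))
    convert h using 1
    simp only [Prod.fst_add, Prod.smul_fst, smul_sub]
    abel
  · have h := hf.2 hu hv ha hb hab
    have h₁ := mul_le_mul_of_nonneg_left ht₁ ha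
    have h₂ := mul_le_mul_of_nonneg_left ht₂ hb
    simp only [smul_eq_mul, Prod.snd_add, Prod.smul_snd] at h h₁ h₂ ⊢
    linarith

/-- Under the Slater condition, every lower bound `p` of a cone-convex program is certified by a
continuous linear functional that is nonnegative on the cone. -/
theorem exists_lagrange_functional {V E : Type*} [AddCommGroup V] [Module ℝ V]
    [NormedAddCommGroup E] [NormedSpace ℝ E] {K : Set E} (hconv : Convex ℝ K)
    (hcone : ∀ x ∈ K, ∀ c : ℝ, 0 ≤ c → c • x ∈ K) {W : Set V} {f : V → ℝ}
    (hf : ConvexOn ℝ W f) {g : V → E}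
    (hg : ∀ u ∈ W, ∀ v ∈ W, ∀ a : ℝ, 0 ≤ a → a ≤ 1 →
      a • g u + (1 - a) • g v - g (a • u + (1 - a) • v) ∈ K)
    (hSlater : ∃ w ∈ W, -g w ∈ interior K) {p : ℝ}
    (hp : ∀ w ∈ W, -g w ∈ K → p ≤ f w) :
    ∃ l : StrongDual ℝ E, (∀ x ∈ K, 0 ≤ l x) ∧ ∀ w ∈ W, p ≤ f w + l (g w) := by
  obtain ⟨w₀, hw₀, hint⟩ := hSlater
  have hzero : (0 : E) ∈ K := by simpa using hcone _ (interior_subset hint) 0 le_rfl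
  have hdisj : Disjoint ((-interior K) ×ˢ Set.Iio p)
      {z : E × ℝ | ∃ w ∈ W, z.1 - g w ∈ K ∧ f w ≤ z.2} := by
    rw [Set.disjoint_left]
    rintro ⟨y, t⟩ ⟨hy, ht⟩ ⟨w, hw, hyw, hft⟩
    have h := hp w hw (by
      have h := add_mem_of_convex_cone hconv hcone (interior_subset hy) hyw
      rwa [neg_add_eq_sub, sub_sub_cancel_left] at h)
    simp only [Set.mem_Iio] at ht hft
    linarith
  obtain ⟨φ, u, hlt, hle⟩ := geometric_hahn_banach_open
    (hconv.interior.neg.prod (convex_Iio p)) (isOpen_interior.neg.prod isOpen_Iio)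
    (convex_upperImage hconv hcone hf hg) hdisj
  set l : StrongDual ℝ E := φ.comp (ContinuousLinearMap.inl ℝ E ℝ) with hl
  set s : ℝ := φ (0, 1) with hs
  have hφ : ∀ y t, φ (y, t) = l y + s * t := by
    intro y t
    have h : ((y, t) : E × ℝ) = (y, 0) + t • (0, 1) := by simp
    rw [h, map_add, map_smul, smul_eq_mul, mul_comm]
    simp [hl, hs]
  have hbelow : ∀ x ∈ interior K, ∀ t < p, -l x + s * t < u := by
    intro x hx t ht
    simpa [hφ] using hlt (-x, t) ⟨by simpa using hx, ht⟩
  have habove : ∀ w ∈ W, ∀ x ∈ K, u ≤ l (g w) + l x + s * f w := by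
    intro w hw x hx
    simpa [hφ] using hle (g w + x, f w) ⟨w, hw, by simpa using hx, le_rfl⟩
  have hspos : 0 < s := by
    have h₁ := hbelow _ hint (p - 1) (by linarith)
    have h₂ := habove w₀ hw₀ 0 hzero
    have h₃ := hp w₀ hw₀ (interior_subset hint)
    simp only [map_neg, neg_neg, map_zero] at h₁ h₂
    by_contra! hneg
    nlinarith
  have hlnonneg : ∀ x ∈ K, 0 ≤ l x := by
    intro x hx
    by_contra! hneg
    have h₀ := habove w₀ hw₀ 0 hzero
    set A := l (g w₀) + s * f w₀
    have hc : 0 ≤ (A - u + 1) / (-l x) := by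
      apply div_nonneg <;> simp only [map_zero] at h₀ <;> linarith
    have h := habove w₀ hw₀ _ (hcone x hx _ hc)
    have hmul : (A - u + 1) / (-l x) * l x = -(A - u + 1) := by
      field_simp [hneg.ne]
    rw [map_smul, smul_eq_mul, hmul] at h
    linarith
  have hsp : s * p ≤ u := by
    by_contra! hneg
    have hden : 0 < l (-g w₀) + s := by linarith [hlnonneg _ (interior_subset hint)]
    set ε := (s * p - u) / (l (-g w₀) + s)
    have hεpos : 0 < ε := div_pos (by linarith) hden
    have h := hbelow _ (smul_mem_interior_of_cone hcone hint hεpos) (p - ε) (by linarith)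
    have hmul : ε * (l (-g w₀) + s) = s * p - u := div_mul_cancel₀ _ hden.ne'
    rw [map_smul, smul_eq_mul] at h
    linarith
  refine ⟨s⁻¹ • l, fun x hx => ?_, fun w hw => ?_⟩
  · exact mul_nonneg (inv_nonneg.2 hspos.le) (hlnonneg x hx)
  · have h := habove w hw 0 hzero
    rw [map_zero, add_zero] at h
    have hmul : s * (f w + s⁻¹ * l (g w)) = l (g w) + s * f w := by
      field_simp
      ring
    change p ≤ f w + s⁻¹ * l (g w)
    exact le_of_mul_le_mul_left (by linarith) hspos

theorem stmt9 {E : Type*} [NormedAddCommGroup E] [InnerProductSpace ℝ E]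
    [FiniteDimensional ℝ E] {n : ℕ}
    (Kc : Set E) (hKclosed : IsClosed Kc) (hKconv : Convex ℝ Kc)
    (hKcone : ∀ x ∈ Kc, ∀ c : ℝ, 0 ≤ c → c • x ∈ Kc)
    (hKpointed : Kc ∩ (-Kc) ⊆ {0})
    (hKint : (interior Kc).Nonempty)
    (W : Set (EuclideanSpace ℝ (Fin n))) (hWne : W.Nonempty) (hWconv : Convex ℝ W)
    (f : EuclideanSpace ℝ (Fin n) → ℝ) (hf : ConvexOn ℝ W f)
    (g : EuclideanSpace ℝ (Fin n) → E)
    (hg : ∀ u ∈ W, ∀ v ∈ W, ∀ a : ℝ, 0 ≤ a → a ≤ 1 →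
      a • g u + (1 - a) • g v - g (a • u + (1 - a) • v) ∈ Kc)
    (hfeas : ∃ w ∈ W, -g w ∈ Kc)
    (hbdd : ∃ c : ℝ, ∀ w ∈ W, -g w ∈ Kc → c ≤ f w)
    (hSlater : ∃ w ∈ W, -g w ∈ interior Kc) :
    ∃ Λ : E, (∀ x ∈ Kc, (0 : ℝ) ≤ ⟪Λ, x⟫) ∧
      sInf {v : ℝ | ∃ w ∈ W, v = f w + ⟪Λ, g w⟫} =
        sInf {v : ℝ | ∃ w ∈ W, -g w ∈ Kc ∧ v = f w} := by
  set P : Set ℝ := {v : ℝ | ∃ w ∈ W, -g w ∈ Kc ∧ v = f w}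
  obtain ⟨c, hc⟩ := hbdd
  have hPbdd : BddBelow P := ⟨c, by rintro _ ⟨w, hw, hgw, rfl⟩; exact hc w hw hgw⟩
  obtain ⟨l, hlK, hl⟩ := exists_lagrange_functional hKconv hKcone hf hg hSlater
    (p := sInf P) (fun w hw hgw => csInf_le hPbdd ⟨w, hw, hgw, rfl⟩)
  have hinner : ∀ x, ⟪(InnerProductSpace.toDual ℝ E).symm l, x⟫ = l x := fun x =>
    InnerProductSpace.toDual_symm_apply
  refine ⟨(InnerProductSpace.toDual ℝ E).symm l, fun x hx => by rw [hinner]; exact hlK x hx, ?_⟩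
  simp only [hinner]
  apply le_antisymm
  · obtain ⟨w₁, hw₁, hgw₁⟩ := hfeas
    refine le_csInf ⟨_, w₁, hw₁, hgw₁, rfl⟩ ?_
    rintro _ ⟨w, hw, hgw, rfl⟩
    have hnonneg := hlK _ hgw
    rw [map_neg] at hnonneg
    have hle : sInf {v : ℝ | ∃ w ∈ W, v = f w + l (g w)} ≤ f w + l (g w) :=
      csInf_le ⟨sInf P, by rintro _ ⟨v, hv, rfl⟩; exact hl v hv⟩ ⟨w, hw, rfl⟩
    linarith
  · obtain ⟨w₁, hw₁⟩ := hWne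
    refine le_csInf ⟨_, w₁, hw₁, rfl⟩ ?_
    rintro _ ⟨w, hw, rfl⟩
    exact hl w hw
end
end

section
/- Let K ≥ 1 be an integer, P a real n×n̄ matrix, S_1,…,S_K symmetric positive semidefinite n̄×n̄ matrices with S_1+⋯+S_K positive definite, 𝒯 ⊆ ℝ_{≥0}^K a nonempty convex compact monotone set containing a point with all coordinates positive, and ρ > 0. Let p ∈ ℝ^n and q, γ ∈ ℝ. Then 2pᵀζ + q ≤ γ holds for every ζ ∈ 𝒳[ρ] if and only if there exist λ ∈ ℝ^K with λ ≥ 0 and α ∈ ℝ such that the block matrix [[α, −pᵀP],[−Pᵀp, ∑_k λ_k S_k]] is positive semidefinite and α + ρ·φ_𝒯(λ) + q ≤ γ. -/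
open Matrix BigOperators

noncomputable section

/-- Lagrange duality for a convex program satisfying Slater's condition. -/
theorem exists_lagrange_multipliers {E ι : Type*} [AddCommGroup E] [Module ℝ E] [Fintype ι]
    {C : Set E} {f : E → ℝ} {g : ι → E → ℝ} (hf : ConcaveOn ℝ C f)
    (hg : ∀ i, ConvexOn ℝ C (g i)) (slater : ∃ x ∈ C, ∀ i, g i x < 0)
    (h : ∀ x ∈ C, (∀ i, g i x ≤ 0) → f x ≤ 0) :
    ∃ lam : ι → ℝ, (∀ i, 0 ≤ lam i) ∧ ∀ x ∈ C, f x ≤ ∑ i, lam i * g i x := by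
  classical
  obtain ⟨x₀, hx₀, hgx₀⟩ := slater
  let A : Set ((ι → ℝ) × ℝ) := {w | ∃ x ∈ C, (∀ i, g i x ≤ w.1 i) ∧ w.2 ≤ f x}
  let B : Set ((ι → ℝ) × ℝ) := Set.pi Set.univ (fun _ => Set.Iio 0) ×ˢ Set.Ioi 0
  have hA : Convex ℝ A := by
    rintro w ⟨x, hx, hgx, hfx⟩ w' ⟨x', hx', hgx', hfx'⟩ a b ha hb hab
    refine ⟨a • x + b • x', hf.1 hx hx' ha hb hab, fun i => ?_, ?_⟩
    · refine ((hg i).2 hx hx' ha hb hab).trans ?_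
      exact add_le_add (mul_le_mul_of_nonneg_left (hgx i) ha)
        (mul_le_mul_of_nonneg_left (hgx' i) hb)
    · refine le_trans ?_ (hf.2 hx hx' ha hb hab)
      exact add_le_add (mul_le_mul_of_nonneg_left hfx ha) (mul_le_mul_of_nonneg_left hfx' hb)
  have hBconv : Convex ℝ B := (convex_pi fun _ _ => convex_Iio 0).prod (convex_Ioi 0)
  have hBopen : IsOpen B := (isOpen_set_pi Set.finite_univ fun _ _ => isOpen_Iio).prod isOpen_Ioi
  have hdisj : Disjoint B A := by
    rw [Set.disjoint_left]
    rintro w ⟨hw, hw'⟩ ⟨x, hx, hgx, hfx⟩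
    have := h x hx fun i => (hgx i).trans (hw i (Set.mem_univ i)).le
    exact absurd (Set.mem_Ioi.1 hw') (not_lt.2 (hfx.trans this))
  obtain ⟨φ, c, hφB, hφA⟩ := geometric_hahn_banach_open hBconv hBopen hA hdisj
  let μ : ι → ℝ := fun i => φ (Pi.single i 1, 0)
  let ν : ℝ := φ (0, 1)
  have hφ : ∀ (u : ι → ℝ) (v : ℝ), φ (u, v) = ∑ i, μ i * u i + ν * v := by
    intro u v
    have huv : (u, v) = ∑ i, u i • ((Pi.single i 1, 0) : (ι → ℝ) × ℝ) + v • (0, 1) := by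
      ext j
      · simp [Prod.fst_sum, Finset.sum_apply, Pi.single_apply]
      · simp [Prod.snd_sum]
    rw [huv, map_add, map_sum, map_smul]
    simp only [map_smul, smul_eq_mul, μ, ν, mul_comm]
  have hc : 0 ≤ c := by
    refine le_of_forall_pos_lt_add fun ε hε => ?_
    let M : ℝ := ν - ∑ i, μ i
    have hM : 0 < |M| + 1 := by positivity
    have := hφB (fun _ => -(ε / (|M| + 1)), ε / (|M| + 1))
      ⟨fun _ _ => by simpa using by positivity, by simpa using by positivity⟩
    rw [hφ, ← Finset.sum_mul] at this
    have h1 : -|M| ≤ M := neg_abs_le M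
    have h2 : ε / (|M| + 1) * (|M| + 1) = ε := by field_simp
    have h3 : 0 < ε / (|M| + 1) := by positivity
    have h4 : M * (ε / (|M| + 1)) < c := by simp only [M]; linarith
    nlinarith
  have hrec : ∀ d : (ι → ℝ) × ℝ, (∀ i, 0 ≤ d.1 i) → d.2 ≤ 0 → 0 ≤ φ d := by
    intro d hd hd'
    by_contra! hneg
    let a := φ (fun i => g i x₀, f x₀)
    have hs : 0 ≤ |a| / -φ d + 1 := by
      have : 0 ≤ |a| / -φ d := div_nonneg (abs_nonneg _) (by linarith)
      linarith
    have := hφA ((fun i => g i x₀, f x₀) + (|a| / -φ d + 1) • d)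
      ⟨x₀, hx₀, fun i => by simpa using mul_nonneg hs (hd i),
        by simpa using mul_nonpos_of_nonneg_of_nonpos hs hd'⟩
    rw [map_add, map_smul, smul_eq_mul] at this
    have h2 : |a| / -φ d * φ d = -|a| := by
      rw [div_neg, neg_mul, div_mul_cancel₀ _ hneg.ne]
    have := le_abs_self a
    linarith
  have hμ : ∀ i, 0 ≤ μ i := fun i => hrec _ (fun j => by
    by_cases hij : j = i
    · subst hij; simp
    · simp [hij]) le_rfl
  have hν : ν ≤ 0 := by
    have := hrec (0, -1) (fun _ => le_rfl) (by norm_num)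
    rw [hφ] at this
    simp at this
    exact this
  have key : ∀ x ∈ C, 0 ≤ ∑ i, μ i * g i x + ν * f x := fun x hx => by
    rw [← hφ]
    exact hc.trans (hφA _ ⟨x, hx, fun _ => le_rfl, le_rfl⟩)
  have hν' : ν < 0 := by
    refine lt_of_le_of_ne hν fun hν0 => ?_
    have h0 : ∀ i, μ i * g i x₀ ≤ 0 := fun i =>
      mul_nonpos_of_nonneg_of_nonpos (hμ i) (hgx₀ i).le
    have hsum : ∑ i, μ i * g i x₀ = 0 :=
      le_antisymm (Finset.sum_nonpos fun i _ => h0 i) (by simpa [hν0] using key x₀ hx₀)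
    have hμ0 : ∀ i, μ i = 0 := fun i => by
      have := (Finset.sum_eq_zero_iff_of_nonpos fun i _ => h0 i).1 hsum i (Finset.mem_univ i)
      exact (mul_eq_zero.1 this).resolve_right (hgx₀ i).ne
    have := hφB (fun _ => -1, 1) ⟨fun _ _ => by simp, by simp⟩
    have h' := hφA (fun i => g i x₀, f x₀) ⟨x₀, hx₀, fun _ => le_rfl, le_rfl⟩
    simp only [hφ, hμ0, hν0] at this h'
    simp at this h'
    linarith
  refine ⟨fun i => μ i / -ν, fun i => div_nonneg (hμ i) (by linarith), fun x hx => ?_⟩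
  have hdiv : ∑ i, μ i / -ν * g i x = (∑ i, μ i * g i x) / -ν := by
    rw [Finset.sum_div]
    exact Finset.sum_congr rfl fun i _ => by ring
  rw [hdiv, le_div_iff₀ (by linarith)]
  have := key x hx
  linarith

theorem Matrix.PosSemidef.convexOn_dotProduct_mulVec {m : Type*} [Fintype m] {M : Matrix m m ℝ}
    (hM : M.PosSemidef) : ConvexOn ℝ Set.univ fun z : m → ℝ => z ⬝ᵥ M *ᵥ z := by
  refine ⟨convex_univ, fun x _ y _ a b ha hb hab => ?_⟩
  have h := hM.dotProduct_mulVec_nonneg (x - y)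
  simp only [star_trivial, mulVec_sub, dotProduct_sub, sub_dotProduct] at h
  simp only [mulVec_add, mulVec_smul, dotProduct_add, add_dotProduct, dotProduct_smul,
    smul_dotProduct, smul_eq_mul]
  obtain rfl : b = 1 - a := by linarith
  nlinarith [mul_nonneg (mul_nonneg ha hb) h]

/-- The quadratic form of the bordered matrix `[[α, -bᵀ], [-b, M]]`. -/
theorem dotProduct_bordered_mulVec {m : Type*} [Fintype m] (M : Matrix m m ℝ) (b : m → ℝ)
    (α : ℝ) (x : Unit ⊕ m → ℝ) :
    x ⬝ᵥ (Matrix.fromBlocks (Matrix.of fun (_ : Unit) (_ : Unit) => α)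
        (Matrix.of fun (_ : Unit) j => -b j) (Matrix.of fun i (_ : Unit) => -b i) M) *ᵥ x =
      α * x (Sum.inl ()) ^ 2 - 2 * x (Sum.inl ()) * (b ⬝ᵥ (x ∘ Sum.inr)) +
        (x ∘ Sum.inr) ⬝ᵥ M *ᵥ (x ∘ Sum.inr) := by
  have h1 : ∀ z : m → ℝ, ((Matrix.of fun (_ : Unit) j => -b j) *ᵥ z) () = -(b ⬝ᵥ z) := fun z => by
    simp [mulVec, dotProduct]
  have h2 : ∀ w : Unit → ℝ, (Matrix.of fun i (_ : Unit) => -b i) *ᵥ w = -(w () • b) := fun w => by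
    ext i
    simp [mulVec, dotProduct, mul_comm]
  have h3 : ∀ w : Unit → ℝ, ((Matrix.of fun (_ : Unit) (_ : Unit) => α) *ᵥ w) () = α * w () :=
    fun w => by simp [mulVec, dotProduct]
  rw [fromBlocks_mulVec, dotProduct_block, Sum.elim_comp_inl, Sum.elim_comp_inr, h2,
    dotProduct_add (x ∘ Sum.inr), dotProduct_neg, dotProduct_smul, dotProduct_comm _ b]
  simp only [dotProduct, Finset.univ_unique, Finset.sum_singleton, PUnit.default_eq_unit,
    Pi.add_apply]
  simp only [h1, h3, Function.comp_apply, smul_eq_mul, dotProduct]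
  ring

/-- The bordered matrix `[[α, -bᵀ], [-b, M]]` is positive semidefinite iff `α` bounds
`z ↦ 2 bᵀ z - zᵀ M z` from above. -/
theorem posSemidef_bordered_iff {m : Type*} [Fintype m] {M : Matrix m m ℝ} (hM : M.PosSemidef)
    (b : m → ℝ) (α : ℝ) :
    (Matrix.fromBlocks (Matrix.of fun (_ : Unit) (_ : Unit) => α)
        (Matrix.of fun (_ : Unit) j => -b j)
        (Matrix.of fun i (_ : Unit) => -b i) M).PosSemidef ↔
      ∀ z : m → ℝ, 2 * (b ⬝ᵥ z) ≤ α + z ⬝ᵥ M *ᵥ z := by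
  constructor
  · intro h z
    have := h.dotProduct_mulVec_nonneg (Sum.elim (fun _ => 1) z)
    rw [star_trivial, dotProduct_bordered_mulVec, Sum.elim_comp_inr] at this
    simp at this
    linarith
  · intro h
    refine .of_dotProduct_mulVec_nonneg ?_ fun x => ?_
    · refine .fromBlocks ?_ ?_ hM.isHermitian <;> ext i j <;> simp
    · rw [star_trivial, dotProduct_bordered_mulVec]
      generalize x (Sum.inl ()) = s
      generalize x ∘ Sum.inr = z
      rcases eq_or_ne s 0 with rfl | hs
      · simpa using hM.dotProduct_mulVec_nonneg z
      · have := h (s⁻¹ • z)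
        simp only [mulVec_smul, dotProduct_smul, smul_dotProduct, smul_eq_mul] at this
        have h2 := mul_le_mul_of_nonneg_left this (sq_nonneg s)
        have e1 : s ^ 2 * (2 * (s⁻¹ * (b ⬝ᵥ z))) = 2 * s * (b ⬝ᵥ z) := by field_simp
        have e2 : s ^ 2 * (α + s⁻¹ * (s⁻¹ * (z ⬝ᵥ M *ᵥ z))) = α * s ^ 2 + z ⬝ᵥ M *ᵥ z := by
          field_simp
        linarith

theorem stmt12 {n nb K : ℕ} (hK : 1 ≤ K)
    (P : Matrix (Fin n) (Fin nb) ℝ)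
    (S : Fin K → Matrix (Fin nb) (Fin nb) ℝ)
    (hS : ∀ k, (S k).PosSemidef)
    (hSsum : (∑ k, S k).PosDef)
    (T : Set (Fin K → ℝ))
    (hTne : T.Nonempty) (hTconv : Convex ℝ T) (hTcomp : IsCompact T)
    (hTnonneg : ∀ t ∈ T, ∀ k, 0 ≤ t k)
    (hTmono : ∀ t t' : Fin K → ℝ, (∀ k, 0 ≤ t k) → (∀ k, t k ≤ t' k) → t' ∈ T → t ∈ T)
    (hTpos : ∃ t ∈ T, ∀ k, 0 < t k)
    (ρ : ℝ) (hρ : 0 < ρ)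
    (p : Fin n → ℝ) (q γ : ℝ) :
    (∀ ζ ∈ ellitope P S T ρ, 2 * (p ⬝ᵥ ζ) + q ≤ γ) ↔
      (∃ lam : Fin K → ℝ, ∃ α : ℝ, (∀ k, 0 ≤ lam k) ∧
        (Matrix.fromBlocks (Matrix.of fun (_ : Unit) (_ : Unit) => α)
            (Matrix.of fun (_ : Unit) j => -(Pᵀ *ᵥ p) j)
            (Matrix.of fun i (_ : Unit) => -(Pᵀ *ᵥ p) i)
            (∑ k, lam k • S k)).PosSemidef ∧
        α + ρ * suppFn T lam + q ≤ γ) := by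
  have hb : ∀ z, p ⬝ᵥ P *ᵥ z = (Pᵀ *ᵥ p) ⬝ᵥ z := fun z => by
    rw [dotProduct_mulVec, mulVec_transpose]
  have hquad : ∀ (lam : Fin K → ℝ) (z : Fin nb → ℝ),
      z ⬝ᵥ (∑ k, lam k • S k) *ᵥ z = ∑ k, lam k * (z ⬝ᵥ S k *ᵥ z) := fun lam z => by
    simp [sum_mulVec, dotProduct_sum, smul_mulVec]
  have hpsd : ∀ lam : Fin K → ℝ, (∀ k, 0 ≤ lam k) → (∑ k, lam k • S k).PosSemidef :=
    fun lam hlam => posSemidef_sum _ fun k _ => (hS k).smul (hlam k)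
  constructor
  · intro h
    let C : Set ((Fin nb → ℝ) × (Fin K → ℝ)) := Set.univ ×ˢ T
    have hC : Convex ℝ C := convex_univ.prod hTconv
    obtain ⟨lam, hlam, hle⟩ := exists_lagrange_multipliers (C := C)
      (f := fun w => 2 * (p ⬝ᵥ P *ᵥ w.1) + q - γ)
      (g := fun k w => w.1 ⬝ᵥ S k *ᵥ w.1 - ρ * w.2 k)
      ⟨hC, fun x _ y _ a b _ _ hab => by
        obtain rfl : b = 1 - a := by linarith
        simp only [Prod.fst_add, Prod.smul_fst, mulVec_add, mulVec_smul, dotProduct_add,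
          dotProduct_smul, smul_eq_mul]
        exact le_of_eq (by ring)⟩
      (fun k => ⟨hC, fun x _ y _ a b ha hb hab => by
        have := (hS k).convexOn_dotProduct_mulVec.2 (Set.mem_univ x.1) (Set.mem_univ y.1) ha hb hab
        simp only [Prod.fst_add, Prod.smul_fst, Prod.snd_add, Prod.smul_snd, Pi.add_apply,
          Pi.smul_apply, smul_eq_mul] at this ⊢
        linarith⟩)
      (by
        obtain ⟨t, ht, htpos⟩ := hTpos
        exact ⟨(0, t), ⟨Set.mem_univ _, ht⟩, fun k => by simpa using mul_pos hρ (htpos k)⟩)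
      (fun w hw hg => by
        have := h (P *ᵥ w.1) ⟨w.1, w.2, hw.2, rfl, fun k => by linarith [hg k]⟩
        linarith)
    refine ⟨lam, γ - q - ρ * suppFn T lam, hlam, ?_, by linarith⟩
    rw [posSemidef_bordered_iff (hpsd lam hlam)]
    intro z
    have hsup : suppFn T lam ≤
        (γ - q - 2 * ((Pᵀ *ᵥ p) ⬝ᵥ z) + z ⬝ᵥ (∑ k, lam k • S k) *ᵥ z) / ρ := by
      refine csSup_le (hTne.image _) ?_
      rintro _ ⟨t, ht, rfl⟩
      have := hle (z, t) ⟨Set.mem_univ _, ht⟩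
      simp only [mul_sub, Finset.sum_sub_distrib, mul_left_comm _ ρ, ← Finset.mul_sum] at this
      rw [← hquad, hb] at this
      rw [le_div_iff₀ hρ]
      linarith
    rw [le_div_iff₀ hρ] at hsup
    linarith
  · rintro ⟨lam, α, hlam, hα, hle⟩ _ ⟨z, t, ht, rfl, hz⟩
    have hα := (posSemidef_bordered_iff (hpsd lam hlam) _ _).1 hα z
    have hsup : ∑ k, lam k * t k ≤ suppFn T lam :=
      le_csSup (hTcomp.image (by fun_prop)).bddAbove ⟨t, ht, rfl⟩
    have hS_le : ∑ k, lam k * (z ⬝ᵥ S k *ᵥ z) ≤ ρ * ∑ k, lam k * t k := by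
      rw [Finset.mul_sum]
      refine Finset.sum_le_sum fun k _ => ?_
      linarith [mul_le_mul_of_nonneg_left (hz k) (hlam k)]
    rw [hquad] at hα
    rw [hb]
    linarith [mul_le_mul_of_nonneg_left hsup hρ.le]
end
end
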